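/- arXiv:1908.06885 — 2 statements merged into one kernel-verified Lean document; each statement's English description precedes it below -/
import Mathlib

section
/- Let A' be an essential line arrangement of d' lines in P^2, let p be an intersection point of A' of maximal multiplicity m' = m(A'), and let L be a line not in A' which passes through p and contains no intersection point of A' other than p (a generic line through p). Set A = A' ∪ {L}, r' = r(A'). Then: (1) τ(A) = τ(A') + d' + m' − 1; (2) if r' < d' − m', then r(A) = r' + 1; (3) if r' = d' − m', then r(A) = r'. -/
open Classical MvPolynomial

variable {K : Type*} [Field K] [CharZero K] {ℓ : ℕ}

/-- A (central) hyperplane arrangement: a finite set of nonzero linear forms,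
pairwise non-proportional. -/
def IsArrangement (A : Finset (MvPolynomial (Fin ℓ) K)) : Prop :=
  (∀ α ∈ A, α ≠ 0 ∧ α.IsHomogeneous 1) ∧
    ∀ α ∈ A, ∀ β ∈ A, α ≠ β → ∀ c : K, α ≠ c • β

/-- The arrangement is essential: the common zero set of its forms is `{0}`. -/
def IsEssential (A : Finset (MvPolynomial (Fin ℓ) K)) : Prop :=
  ∀ v : Fin ℓ → K, (∀ α ∈ A, eval v α = 0) → v = 0

/-- The defining polynomial `Q(A)`. -/
noncomputable def Qpoly (A : Finset (MvPolynomial (Fin ℓ) K)) : MvPolynomial (Fin ℓ) K :=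
  ∏ α ∈ A, α

/-- Apply a derivation `θ = Σ θ_j ∂_j` to a polynomial. -/
noncomputable def applyDer (θ : Fin ℓ → MvPolynomial (Fin ℓ) K)
    (f : MvPolynomial (Fin ℓ) K) : MvPolynomial (Fin ℓ) K :=
  ∑ j, θ j * pderiv j f

/-- The minimal degree of a Jacobian relation `r(A)`. -/
noncomputable def mdr (A : Finset (MvPolynomial (Fin ℓ) K)) : ℕ :=
  sInf {r | ∃ θ : Fin ℓ → MvPolynomial (Fin ℓ) K, θ ≠ 0 ∧
    (∀ j, (θ j).IsHomogeneous r) ∧ applyDer θ (Qpoly A) = 0}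

/-- The number of elements `|A^H|` of the restriction of `A` to `H`:
the number of distinct subspaces `H ∩ ker α_L`, `L ∈ A \ {H}`. -/
noncomputable def restCard (A : Finset (MvPolynomial (Fin ℓ) K))
    (H : MvPolynomial (Fin ℓ) K) : ℕ :=
  ((A.erase H).image fun L => {v : Fin ℓ → K | eval v H = 0 ∧ eval v L = 0}).card

/-- The number `n_j(A)` of intersection points of multiplicity `j` of a line
arrangement `A` in `P^2`. An intersection point is encoded (bijectively) by the set
of lines of `A` passing through it, which has at least two elements. -/
noncomputable def nPoints (A : Finset (MvPolynomial (Fin 3) K)) (j : ℕ) : ℕ :=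
  Set.ncard {T : Finset (MvPolynomial (Fin 3) K) |
    ∃ v : Fin 3 → K, v ≠ 0 ∧ T = A.filter (fun α => eval v α = 0) ∧
      2 ≤ T.card ∧ T.card = j}

/-- The maximal multiplicity `m(A)` of an intersection point of `A`. -/
noncomputable def maxMult (A : Finset (MvPolynomial (Fin 3) K)) : ℕ :=
  sSup {j | 2 ≤ j ∧ nPoints A j ≠ 0}

/-- The global Tjurina number `τ(A) = Σ_{j ≥ 2} n_j(A)·(j−1)²` of a line arrangement. -/
noncomputable def tjurina (A : Finset (MvPolynomial (Fin 3) K)) : ℕ :=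
  ∑ j ∈ Finset.range (A.card + 1), nPoints A j * (j - 1) ^ 2

/-- `τ(d,r)_max = (d−1)(d−r−1) + r² − C(2r−d+2, 2)`, for `d/2 ≤ r ≤ d−1`. -/
def tauMax (d r : ℕ) : ℕ :=
  (d - 1) * (d - r - 1) + r ^ 2 - Nat.choose (2 * r - d + 2) 2

/-- A line arrangement `A` is maximal Tjurina of type `(d, r)` if it consists of `d`
lines, `r(A) = r` and `τ(A) = τ(d,r)_max`. -/
def IsMaxTjurina (A : Finset (MvPolynomial (Fin 3) K)) (d r : ℕ) : Prop :=
  A.card = d ∧ mdr A = r ∧ tjurina A = tauMax d r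

set_option linter.unusedSectionVars false

/-- Linear coefficients of a form. -/
noncomputable def lc (α : MvPolynomial (Fin 3) K) (j : Fin 3) : K := coeff (Finsupp.single j 1) α

lemma lin_eq {α : MvPolynomial (Fin 3) K} (h : α.IsHomogeneous 1) :
    α = ∑ j, C (lc α j) * X j := by
  have h' : α ∈ homogeneousSubmodule (Fin 3) K 1 := h
  rw [homogeneousSubmodule_one_eq_span_X] at h'
  induction h' using Submodule.span_induction with
  | mem x hx =>
    obtain ⟨i, rfl⟩ := hx
    have : ∀ j, C (lc (X i : MvPolynomial (Fin 3) K) j) * X j = if i = j then X i else 0 := by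
      intro j
      by_cases hij : i = j
      · subst hij; simp [lc]
      · simp [lc, hij, coeff_X, Finsupp.single_left_inj]
    simp [this]
  | zero => simp [lc]
  | add x y hx hy ihx ihy =>
    rw [← homogeneousSubmodule_one_eq_span_X] at hx hy
    conv_lhs => rw [ihx hx, ihy hy]
    simp [lc, add_mul, Finset.sum_add_distrib]
  | smul a x hx ih =>
    rw [← homogeneousSubmodule_one_eq_span_X] at hx
    conv_lhs => rw [ih hx]
    simp [lc, smul_eq_C_mul, Finset.mul_sum, mul_assoc]

lemma pderiv_lin {α : MvPolynomial (Fin 3) K} (h : α.IsHomogeneous 1) (j : Fin 3) :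
    pderiv j α = C (lc α j) := by
  conv_lhs => rw [lin_eq h]
  simp [pderiv_X, Pi.single_apply]

lemma eval_lin {α : MvPolynomial (Fin 3) K} (h : α.IsHomogeneous 1) (w : Fin 3 → K) :
    eval w α = lc α 0 * w 0 + lc α 1 * w 1 + lc α 2 * w 2 := by
  conv_lhs => rw [lin_eq h]
  simp [Fin.sum_univ_three]

lemma applyDer_lin {α : MvPolynomial (Fin 3) K} (h : α.IsHomogeneous 1)
    (θ : Fin 3 → MvPolynomial (Fin 3) K) :
    applyDer θ α = θ 0 * C (lc α 0) + θ 1 * C (lc α 1) + θ 2 * C (lc α 2) := by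
  simp [applyDer, pderiv_lin h, Fin.sum_univ_three]

lemma hcomp_mul {p q : MvPolynomial (Fin 3) K} {m : ℕ} (hp : p.IsHomogeneous m) (k : ℕ) :
    homogeneousComponent (m + k) (p * q) = p * homogeneousComponent k q := by
  conv_lhs => rw [← sum_homogeneousComponent q, Finset.mul_sum, map_sum]
  have : ∀ i, homogeneousComponent (m + k) (p * homogeneousComponent i q)
      = if i = k then p * homogeneousComponent k q else 0 := by
    intro i
    rw [homogeneousComponent_of_mem (n := m + i)]
    · by_cases h : i = k
      · subst h; simp
      · simp [h, Ne.symm h]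
    · exact hp.mul (homogeneousComponent_isHomogeneous i q)
  simp only [this, Finset.sum_ite_eq']
  split_ifs with h
  · rfl
  · rw [homogeneousComponent_eq_zero, mul_zero]
    simp at h; omega

lemma hom_quot {p q : MvPolynomial (Fin 3) K} {m n : ℕ} (hp : p.IsHomogeneous m) (hp0 : p ≠ 0)
    (hq : (p * q).IsHomogeneous n) (i : ℕ) (hi : m + i ≠ n) : homogeneousComponent i q = 0 := by
  have h := hcomp_mul (q := q) hp i
  rw [homogeneousComponent_of_mem (n := n) hq, if_neg hi] at h
  exact (mul_eq_zero.mp h.symm).resolve_left hp0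

lemma hom_quot' {p q : MvPolynomial (Fin 3) K} {m k : ℕ} (hp : p.IsHomogeneous m) (hp0 : p ≠ 0)
    (hq : (p * q).IsHomogeneous (m + k)) : q.IsHomogeneous k := by
  have h : homogeneousComponent k q = q := by
    conv_rhs => rw [← sum_homogeneousComponent q]
    rw [Finset.sum_eq_single k]
    · intro i _ hi
      exact hom_quot hp hp0 hq i (by omega)
    · intro h
      exact homogeneousComponent_eq_zero _ _ (by simp at h; omega)
  rw [← h]; exact homogeneousComponent_isHomogeneous k q

lemma hom_quot_lt {p q : MvPolynomial (Fin 3) K} {m n : ℕ} (hp : p.IsHomogeneous m) (hp0 : p ≠ 0)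
    (hq : (p * q).IsHomogeneous n) (hn : n < m) : q = 0 := by
  rw [← sum_homogeneousComponent q]
  exact Finset.sum_eq_zero fun i _ => hom_quot hp hp0 hq i (by omega)

lemma lin_prime {α : MvPolynomial (Fin 3) K} (h : α.IsHomogeneous 1) (h0 : α ≠ 0) : Prime α := by
  apply Irreducible.prime
  apply irreducible_of_totalDegree_eq_one (h.totalDegree h0)
  intro x hx
  by_contra hx'
  have hx0 : x = 0 := by
    by_contra hne; exact hx' (isUnit_iff_ne_zero.mpr hne)
  subst hx0
  apply h0
  ext d; simpa using hx d

lemma lin_dvd {α β : MvPolynomial (Fin 3) K} (hα : α.IsHomogeneous 1) (hα0 : α ≠ 0)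
    (hβ : β.IsHomogeneous 1) (h : α ∣ β) : ∃ c : K, β = c • α := by
  obtain ⟨q, rfl⟩ := h
  have := hom_quot' (k := 0) hα hα0 hβ
  rw [← totalDegree_zero_iff_isHomogeneous, totalDegree_eq_zero_iff_eq_C] at this
  exact ⟨coeff 0 q, by rw [this, smul_eq_C_mul, mul_comm]; simp⟩

/-- Not a multiple of the Euler field. -/
def NE (θ : Fin 3 → MvPolynomial (Fin 3) K) : Prop := ∃ i j, θ i * X j ≠ θ j * X i

/-- Logarithmic degrees. -/
def GoodDeg (A : Finset (MvPolynomial (Fin 3) K)) (r : ℕ) : Prop :=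
  ∃ θ : Fin 3 → MvPolynomial (Fin 3) K, NE θ ∧ (∀ j, (θ j).IsHomogeneous r) ∧
    ∀ α ∈ A, α ∣ applyDer θ α

lemma applyDer_mul (θ : Fin 3 → MvPolynomial (Fin 3) K) (p q : MvPolynomial (Fin 3) K) :
    applyDer θ (p * q) = p * applyDer θ q + q * applyDer θ p := by
  simp only [applyDer, Fin.sum_univ_three, Derivation.leibniz, smul_eq_mul]; ring

lemma dvd_applyDer_prod (θ : Fin 3 → MvPolynomial (Fin 3) K)
    (A : Finset (MvPolynomial (Fin 3) K)) (h : ∀ α ∈ A, α ∣ applyDer θ α) :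
    Qpoly A ∣ applyDer θ (Qpoly A) := by
  induction A using Finset.induction_on with
  | empty => simp [Qpoly]
  | insert a s ha ih =>
    have h1 := ih fun α hα => h α (Finset.mem_insert_of_mem hα)
    have h2 := h a (Finset.mem_insert_self _ _)
    simp only [Qpoly, Finset.prod_insert ha] at h1 ⊢
    rw [applyDer_mul]
    refine dvd_add (mul_dvd_mul_left _ h1) ?_
    rw [mul_comm a]
    exact mul_dvd_mul_left _ h2

lemma Qpoly_hom {A : Finset (MvPolynomial (Fin 3) K)} (hA : IsArrangement A) :
    (Qpoly A).IsHomogeneous A.card := by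
  have := IsHomogeneous.prod A (fun α => α) (fun _ => 1) (fun i hi => (hA.1 i hi).2)
  simpa [Qpoly] using this

lemma Qpoly_ne {A : Finset (MvPolynomial (Fin 3) K)} (hA : IsArrangement A) :
    Qpoly A ≠ 0 := Finset.prod_ne_zero_iff.mpr fun α hα => (hA.1 α hα).1

lemma not_dvd_of_ne {A : Finset (MvPolynomial (Fin 3) K)} (hA : IsArrangement A)
    {α β : MvPolynomial (Fin 3) K} (hα : α ∈ A) (hβ : β ∈ A) (hne : α ≠ β) : ¬ α ∣ β := by
  intro h
  obtain ⟨c, hc⟩ := lin_dvd (hA.1 α hα).2 (hA.1 α hα).1 (hA.1 β hβ).2 h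
  exact hA.2 β hβ α hα (Ne.symm hne) c hc

lemma goodDeg_iff {A : Finset (MvPolynomial (Fin 3) K)} (hA : IsArrangement A)
    (hne : A.Nonempty) (r : ℕ) :
    GoodDeg A r ↔ r ∈ {r | ∃ θ : Fin 3 → MvPolynomial (Fin 3) K, θ ≠ 0 ∧
      (∀ j, (θ j).IsHomogeneous r) ∧ applyDer θ (Qpoly A) = 0} := by
  have hd : (A.card : MvPolynomial (Fin 3) K) ≠ 0 := by
    simpa using hne.ne_empty
  have hdK : (A.card : K) ≠ 0 := by simpa using hne.ne_empty
  have hE := (Qpoly_hom hA).sum_X_mul_pderiv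
  rw [Fin.sum_univ_three, nsmul_eq_mul] at hE
  constructor
  · rintro ⟨θ, ⟨i, j, hij⟩, hh, hdv⟩
    obtain ⟨g, hg⟩ := dvd_applyDer_prod θ A hdv
    have hhom : (Qpoly A * g).IsHomogeneous (r + (A.card - 1)) := by
      rw [← hg, applyDer]
      exact IsHomogeneous.sum _ _ _ fun j _ => (hh j).mul (Qpoly_hom hA).pderiv
    have hc1 : 1 ≤ A.card := hne.card_pos
    have hgX : ∀ j, (g * X j).IsHomogeneous r := by
      intro j
      rcases Nat.eq_zero_or_pos r with h0 | h0
      · have : g = 0 := hom_quot_lt (Qpoly_hom hA) (Qpoly_ne hA) hhom (by omega)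
        rw [this, zero_mul]; exact isHomogeneous_zero _ _ _
      · have : g.IsHomogeneous (r - 1) := by
          apply hom_quot' (Qpoly_hom hA) (Qpoly_ne hA)
          convert hhom using 1; omega
        convert this.mul (isHomogeneous_X K j) using 1; omega
    refine ⟨fun k => θ k - C ((A.card : K)⁻¹) * (g * X k), ?_, ?_, ?_⟩
    · intro h0
      apply hij
      have h1 := sub_eq_zero.mp (congrFun h0 i)
      have h2 := sub_eq_zero.mp (congrFun h0 j)
      rw [h1, h2]; ring
    · intro k
      exact (hh k).sub ((hgX k).C_mul _)
    · have hC : C ((A.card : K)⁻¹) * (A.card : MvPolynomial (Fin 3) K) = 1 := by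
        rw [← map_natCast (C : K →+* MvPolynomial (Fin 3) K), ← C_mul, inv_mul_cancel₀ hdK, C_1]
      simp only [applyDer, Fin.sum_univ_three] at hg ⊢
      linear_combination hg - C ((A.card : K)⁻¹) * g * hE - g * Qpoly A * hC
  · rintro ⟨θ, h0, hh, hz⟩
    refine ⟨θ, ?_, hh, ?_⟩
    · by_contra hcon
      simp only [NE, not_exists, not_not] at hcon
      apply h0
      funext i
      have : θ i * (A.card * Qpoly A) = 0 := by
        rw [← hE]
        simp only [applyDer, Fin.sum_univ_three] at hz
        linear_combination X i * hz + pderiv 0 (Qpoly A) * hcon i 0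
          + pderiv 1 (Qpoly A) * hcon i 1 + pderiv 2 (Qpoly A) * hcon i 2
      exact (mul_eq_zero.mp this).resolve_right (mul_ne_zero hd (Qpoly_ne hA))
    · intro α hα
      have hsplit : Qpoly A = α * ∏ β ∈ A.erase α, β := (Finset.mul_prod_erase A id hα).symm
      rw [hsplit, applyDer_mul] at hz
      have hp := lin_prime (hA.1 α hα).2 (hA.1 α hα).1
      have hdv : α ∣ (∏ β ∈ A.erase α, β) * applyDer θ α :=
        ⟨-applyDer θ (∏ β ∈ A.erase α, β), by linear_combination hz⟩
      refine (hp.dvd_or_dvd hdv).resolve_left ?_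
      intro h
      obtain ⟨β, hβ, hd⟩ := hp.exists_mem_finset_dvd h
      exact not_dvd_of_ne hA hα (Finset.mem_of_mem_erase hβ) (Finset.ne_of_mem_erase hβ).symm hd

lemma mdr_eq {A : Finset (MvPolynomial (Fin 3) K)} (hA : IsArrangement A)
    (hne : A.Nonempty) : mdr A = sInf {r | GoodDeg A r} := by
  unfold mdr
  congr 1
  ext r
  exact (goodDeg_iff hA hne r).symm

/-- The derivation along the pencil centre. -/
lemma goodDeg_pencil {A : Finset (MvPolynomial (Fin 3) K)} (hA : IsArrangement A)
    (v : Fin 3 → K) (hv : v ≠ 0) : GoodDeg A (A.filter fun α => eval v α ≠ 0).card := by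
  set B := A.filter fun α => eval v α ≠ 0 with hB
  have hBA : IsArrangement B := ⟨fun α h => hA.1 α (Finset.mem_filter.mp h).1,
    fun α h β h' => hA.2 α (Finset.mem_filter.mp h).1 β (Finset.mem_filter.mp h').1⟩
  refine ⟨fun j => C (v j) * Qpoly B, ?_, fun j => (Qpoly_hom hBA).C_mul _, ?_⟩
  · obtain ⟨j, hj⟩ := Function.ne_iff.mp hv
    obtain ⟨i, hi⟩ : ∃ i : Fin 3, i ≠ j := exists_ne j
    refine ⟨j, i, fun h => ?_⟩
    have h2 : C (v j) * X i = (C (v i) * X j : MvPolynomial (Fin 3) K) := by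
      apply mul_left_cancel₀ (Qpoly_ne hBA)
      linear_combination h
    have h3 := congrArg (eval (Pi.single i (1 : K))) h2
    simp [hi.symm] at h3
    exact hj h3
  · intro α hα
    by_cases h : eval v α = 0
    · have : applyDer (fun j => C (v j) * Qpoly B) α = 0 := by
        rw [applyDer_lin (hA.1 α hα).2]
        rw [eval_lin (hA.1 α hα).2] at h
        have h' := congrArg (C : K → MvPolynomial (Fin 3) K) h
        simp only [map_add, map_mul, map_zero] at h'
        linear_combination Qpoly B * h'
      rw [this]; exact dvd_zero _
    · have hd : α ∣ Qpoly B := Finset.dvd_prod_of_mem id (Finset.mem_filter.mpr ⟨hα, h⟩)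
      rw [applyDer_lin (hA.1 α hα).2]
      exact dvd_add (dvd_add ((hd.mul_left _).mul_right _) ((hd.mul_left _).mul_right _))
        ((hd.mul_left _).mul_right _)

lemma goodDeg_mul {A : Finset (MvPolynomial (Fin 3) K)} {L : MvPolynomial (Fin 3) K}
    (hL0 : L ≠ 0) (hL1 : L.IsHomogeneous 1) {r : ℕ} (h : GoodDeg A r) :
    GoodDeg (insert L A) (r + 1) := by
  obtain ⟨θ, ⟨i, j, hij⟩, hh, hdv⟩ := h
  have key : ∀ f, applyDer (fun j => L * θ j) f = L * applyDer θ f := by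
    intro f; simp only [applyDer, Fin.sum_univ_three]; ring
  refine ⟨fun j => L * θ j, ⟨i, j, fun h => hij ?_⟩, fun j => ?_, fun α hα => ?_⟩
  · apply mul_left_cancel₀ hL0; linear_combination h
  · rw [add_comm]; exact hL1.mul (hh j)
  · rw [key]
    rcases Finset.mem_insert.mp hα with rfl | hα
    · exact dvd_mul_right _ _
    · exact (hdv α hα).mul_left _

lemma goodDeg_mono {A : Finset (MvPolynomial (Fin 3) K)} {L : MvPolynomial (Fin 3) K}
    {r : ℕ} (h : GoodDeg (insert L A) r) : GoodDeg A r := by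
  obtain ⟨θ, hn, hh, hdv⟩ := h
  exact ⟨θ, hn, hh, fun α hα => hdv α (Finset.mem_insert_of_mem hα)⟩

lemma prop_of_cross {α L : MvPolynomial (Fin 3) K} (hα : α.IsHomogeneous 1)
    (hL : L.IsHomogeneous 1) (hL0 : L ≠ 0)
    (h : ∀ i j, lc α i * lc L j = lc α j * lc L i) : ∃ c : K, α = c • L := by
  obtain ⟨j, hj⟩ : ∃ j, lc L j ≠ 0 := by
    by_contra hcon
    push Not at hcon
    apply hL0
    rw [lin_eq hL]; simp [hcon]
  refine ⟨lc α j / lc L j, ?_⟩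
  rw [smul_eq_C_mul]
  rw [lin_eq hα]
  have e : C (lc α j / lc L j) * L = C (lc α j / lc L j) * ∑ j, C (lc L j) * X j := by
    rw [← lin_eq hL]
  rw [← lin_eq hα, e, Finset.mul_sum]
  conv_lhs => rw [lin_eq hα]
  refine Finset.sum_congr rfl fun i _ => ?_
  rw [← mul_assoc, ← C_mul]
  congr 2
  field_simp
  exact h i j

lemma exists_dual {L : MvPolynomial (Fin 3) K} (hL : L.IsHomogeneous 1) (hL0 : L ≠ 0) :
    ∃ u : Fin 3 → K, lc L 0 * u 0 + lc L 1 * u 1 + lc L 2 * u 2 = 1 := by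
  obtain ⟨j, hj⟩ : ∃ j, lc L j ≠ 0 := by
    by_contra hcon
    push Not at hcon
    apply hL0
    rw [lin_eq hL]; simp [hcon]
  refine ⟨Pi.single j (lc L j)⁻¹, ?_⟩
  fin_cases j <;> simp_all

/-- The common zero of two non-proportional forms. -/
lemma exists_common_zero {α L : MvPolynomial (Fin 3) K} (hα : α.IsHomogeneous 1)
    (hL : L.IsHomogeneous 1) (hL0 : L ≠ 0) (hn : ∀ c : K, α ≠ c • L) :
    ∃ w : Fin 3 → K, w ≠ 0 ∧ eval w α = 0 ∧ eval w L = 0 := by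
  refine ⟨![lc α 1 * lc L 2 - lc α 2 * lc L 1, lc α 2 * lc L 0 - lc α 0 * lc L 2,
    lc α 0 * lc L 1 - lc α 1 * lc L 0], ?_, ?_, ?_⟩
  · intro h0
    have e0 := congrFun h0 0
    have e1 := congrFun h0 1
    have e2 := congrFun h0 2
    simp at e0 e1 e2
    obtain ⟨c, hc⟩ := prop_of_cross hα hL hL0 (by
      intro i j
      fin_cases i <;> fin_cases j <;> simp <;> grind)
    exact hn c hc
  · rw [eval_lin hα]; simp; ring
  · rw [eval_lin hL]; simp; ring

lemma descent {A' : Finset (MvPolynomial (Fin 3) K)} {L : MvPolynomial (Fin 3) K}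
    (hL : L ∉ A') (hA : IsArrangement (insert L A')) (v : Fin 3 → K)
    (α₀ : MvPolynomial (Fin 3) K) (hα₀ : α₀ ∈ A') (hα₀v : eval v α₀ = 0)
    (hgen : ∀ w : Fin 3 → K, w ≠ 0 → eval w L = 0 →
      2 ≤ (A'.filter fun α => eval w α = 0).card → ∃ c : K, w = c • v)
    {r : ℕ} (hr : r < (A'.filter fun α => eval v α ≠ 0).card) (h : GoodDeg (insert L A') r) :
    ∃ s, s < r ∧ GoodDeg A' s := by
  obtain ⟨θ, hNE, hh, hdv⟩ := h
  have hLm := Finset.mem_insert_self L A'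
  obtain ⟨hL0, hL1⟩ := hA.1 L hLm
  have hmem : ∀ α ∈ A', α ∈ insert L A' := fun α h => Finset.mem_insert_of_mem h
  have hneL : ∀ α ∈ A', α ≠ L := fun α h e => hL (e ▸ h)
  have hnp : ∀ α ∈ A', ∀ c : K, α ≠ c • L := fun α h => hA.2 α (hmem α h) L hLm (hneL α h)
  obtain ⟨u, hu⟩ := exists_dual hL1 hL0
  have huC := congrArg (C : K → MvPolynomial (Fin 3) K) hu
  simp only [map_add, map_mul, map_one] at huC
  set y : Fin 3 → MvPolynomial (Fin 3) K := fun j => X j - L * C (u j) with hy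
  set π : MvPolynomial (Fin 3) K →ₐ[K] MvPolynomial (Fin 3) K := aeval y with hπ
  set a : Fin 3 → MvPolynomial (Fin 3) K := fun j => π (θ j) with ha
  have hy1 : ∀ j, (y j).IsHomogeneous 1 := by
    intro j
    refine (isHomogeneous_X K j).sub ?_
    rw [mul_comm]; exact hL1.C_mul _
  have ha1 : ∀ j, (a j).IsHomogeneous r := by
    intro j
    have := (hh j).aeval y hy1
    rw [one_mul] at this
    exact this
  have hπC : ∀ c : K, π (C c) = C c := fun c => by simp [hπ]
  have hmod : ∀ p, L ∣ p - π p := by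
    intro p
    induction p using MvPolynomial.induction_on with
    | C c => rw [hπC, sub_self]; exact dvd_zero _
    | add p q hp hq =>
      rw [map_add]
      convert dvd_add hp hq using 1; ring
    | mul_X p i hp =>
      have e : π (X i) = X i - L * C (u i) := by simp [hπ, hy]
      rw [map_mul, e]
      have : p * X i - π p * (X i - L * C (u i)) = (p - π p) * X i + L * (π p * C (u i)) := by ring
      rw [this]
      exact dvd_add (hp.mul_right _) (dvd_mul_right _ _)
  have hπlin : ∀ α : MvPolynomial (Fin 3) K, α.IsHomogeneous 1 →
      π α = C (lc α 0) * y 0 + C (lc α 1) * y 1 + C (lc α 2) * y 2 := by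
    intro α hα
    conv_lhs => rw [lin_eq hα]
    simp [Fin.sum_univ_three, hπ, MvPolynomial.algebraMap_eq]
  have hlin3 : ∀ α : MvPolynomial (Fin 3) K, α.IsHomogeneous 1 →
      α = C (lc α 0) * X 0 + C (lc α 1) * X 1 + C (lc α 2) * X 2 := by
    intro α hα
    conv_lhs => rw [lin_eq hα]
    simp [Fin.sum_univ_three]
  have hπeq : ∀ α : MvPolynomial (Fin 3) K, α.IsHomogeneous 1 →
      π α = α - C (eval u α) * L := by
    intro α hα
    rw [hπlin α hα, eval_lin hα]
    simp only [hy, map_add, map_mul]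
    linear_combination - hlin3 α hα
  have hπL : π L = 0 := by
    rw [hπeq L hL1, eval_lin hL1, hu]; simp
  have hLy : C (lc L 0) * y 0 + C (lc L 1) * y 1 + C (lc L 2) * y 2 = 0 := by
    rw [← hπlin L hL1, hπL]
  have hπD : ∀ α : MvPolynomial (Fin 3) K, α.IsHomogeneous 1 →
      π (applyDer θ α) = a 0 * C (lc α 0) + a 1 * C (lc α 1) + a 2 * C (lc α 2) := by
    intro α hα
    rw [applyDer_lin hα]
    simp only [map_add, map_mul, hπC, ha]
  have hLa : a 0 * C (lc L 0) + a 1 * C (lc L 1) + a 2 * C (lc L 2) = 0 := by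
    rw [← hπD L hL1]
    obtain ⟨q, hq⟩ := hdv L hLm
    rw [hq, map_mul, hπL, zero_mul]
  have hπ0 : ∀ α ∈ A', π α ≠ 0 := by
    intro α hα h0
    rw [hπeq α (hA.1 α (hmem α hα)).2, sub_eq_zero] at h0
    exact hnp α hα (eval u α) (by rw [smul_eq_C_mul]; exact h0)
  have hπ1 : ∀ α ∈ A', (π α).IsHomogeneous 1 := by
    intro α hα
    have := ((hA.1 α (hmem α hα)).2).aeval y hy1
    rw [one_mul] at this
    exact this
  have hπdvd : ∀ α ∈ A', π α ∣ a 0 * C (lc α 0) + a 1 * C (lc α 1) + a 2 * C (lc α 2) := by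
    intro α hα
    rw [← hπD α (hA.1 α (hmem α hα)).2]
    exact map_dvd π (hdv α (hmem α hα))
  set P : MvPolynomial (Fin 3) K := C (u 0) * (y 1 * a 2 - y 2 * a 1)
    + C (u 1) * (y 2 * a 0 - y 0 * a 2) + C (u 2) * (y 0 * a 1 - y 1 * a 0) with hP
  have c0 : y 1 * a 2 - y 2 * a 1 = P * C (lc L 0) := by
    rw [hP]
    linear_combination - (y 1 * a 2 - y 2 * a 1) * huC
      - C (u 1) * (y 2 * hLa - a 2 * hLy) + C (u 2) * (y 1 * hLa - a 1 * hLy)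
  have c1 : y 2 * a 0 - y 0 * a 2 = P * C (lc L 1) := by
    rw [hP]
    linear_combination - (y 2 * a 0 - y 0 * a 2) * huC
      - C (u 2) * (y 0 * hLa - a 0 * hLy) + C (u 0) * (y 2 * hLa - a 2 * hLy)
  have c2 : y 0 * a 1 - y 1 * a 0 = P * C (lc L 2) := by
    rw [hP]
    linear_combination - (y 0 * a 1 - y 1 * a 0) * huC
      - C (u 0) * (y 1 * hLa - a 1 * hLy) + C (u 1) * (y 0 * hLa - a 0 * hLy)
  have hcr : ∀ α : MvPolynomial (Fin 3) K, α.IsHomogeneous 1 → ∀ k,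
      ∃ e : K, y k * (a 0 * C (lc α 0) + a 1 * C (lc α 1) + a 2 * C (lc α 2)) - a k * π α
        = P * C e ∧ e = (![lc α 1 * lc L 2 - lc α 2 * lc L 1, lc α 2 * lc L 0 - lc α 0 * lc L 2,
    lc α 0 * lc L 1 - lc α 1 * lc L 0] : Fin 3 → K) k := by
    intro α hα k
    refine ⟨_, ?_, rfl⟩
    rw [hπlin α hα]
    fin_cases k <;> simp
    · linear_combination C (lc α 1) * c2 - C (lc α 2) * c1
    · linear_combination C (lc α 2) * c0 - C (lc α 0) * c2
    · linear_combination C (lc α 0) * c1 - C (lc α 1) * c0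
  have hdP : ∀ α ∈ A', π α ∣ P := by
    intro α hα
    have hα1 := (hA.1 α (hmem α hα)).2
    have hk : ∃ k, (![lc α 1 * lc L 2 - lc α 2 * lc L 1, lc α 2 * lc L 0 - lc α 0 * lc L 2,
        lc α 0 * lc L 1 - lc α 1 * lc L 0] : Fin 3 → K) k ≠ 0 := by
      by_contra hcon
      push Not at hcon
      have e0 := hcon 0
      have e1 := hcon 1
      have e2 := hcon 2
      simp at e0 e1 e2
      obtain ⟨c, hc⟩ := prop_of_cross hα1 hL1 hL0 (by
        intro i j
        fin_cases i <;> fin_cases j <;> simp <;> grind)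
      exact hnp α hα c hc
    obtain ⟨k, hk⟩ := hk
    obtain ⟨e, he, hek⟩ := hcr α hα1 k
    have hd : π α ∣ P * C e := by
      rw [← he]
      exact dvd_sub ((hπdvd α hα).mul_left _) (dvd_mul_left _ _)
    have hunit : IsUnit (C e : MvPolynomial (Fin 3) K) := by
      rw [← hek] at hk
      exact (isUnit_iff_ne_zero.mpr hk).map C
    exact (hunit.dvd_mul_right).mp hd
  set B := insert α₀ (A'.filter fun α => eval v α ≠ 0) with hB
  have hBA : ∀ α ∈ B, α ∈ A' := by
    intro α hα
    rcases Finset.mem_insert.mp hα with rfl | h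
    · exact hα₀
    · exact (Finset.mem_filter.mp h).1
  have hBcard : B.card = (A'.filter fun α => eval v α ≠ 0).card + 1 := by
    rw [hB, Finset.card_insert_of_notMem]
    simp [hα₀v]
  have hprod : ∏ α ∈ B, π α ∣ P := by
    apply Finset.prod_dvd_of_isRelPrime
    · intro α hα β hβ hne
      have hα' := hBA α hα
      have hβ' := hBA β hβ
      have hα1 := (hA.1 α (hmem α hα')).2
      have hβ1 := (hA.1 β (hmem β hβ')).2
      have hirr := (lin_prime (hπ1 α hα') (hπ0 α hα')).irreducible
      change IsRelPrime (π α) (π β)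
      rw [hirr.isRelPrime_iff_not_dvd]
      intro hd
      obtain ⟨c, hc⟩ := lin_dvd (hπ1 α hα') (hπ0 α hα') (hπ1 β hβ') hd
      obtain ⟨w, hw0, hwα, hwL⟩ := exists_common_zero hα1 hL1 hL0 (hnp α hα')
      have hwβ : eval w β = 0 := by
        have := congrArg (eval w) hc
        rw [hπeq α hα1, hπeq β hβ1] at this
        simpa [hwα, hwL, smul_eval] using this
      obtain ⟨t, ht⟩ := hgen w hw0 hwL (by
        rw [← Finset.card_pair hne]
        apply Finset.card_le_card
        intro γ hγ
        rcases Finset.mem_insert.mp hγ with rfl | hγ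
        · exact Finset.mem_filter.mpr ⟨hα', hwα⟩
        · rw [Finset.mem_singleton] at hγ
          subst hγ
          exact Finset.mem_filter.mpr ⟨hβ', hwβ⟩)
      have ht0 : t ≠ 0 := by
        rintro rfl; exact hw0 (by simpa using ht)
      have hz : ∀ γ : MvPolynomial (Fin 3) K, γ.IsHomogeneous 1 → eval w γ = 0 →
          eval v γ = 0 := by
        intro γ hγ h0
        rw [eval_lin hγ, ht] at h0
        rw [eval_lin hγ]
        simp only [Pi.smul_apply, smul_eq_mul] at h0
        apply (mul_eq_zero.mp (_ : t * _ = 0)).resolve_left ht0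
        linear_combination h0
      have hα2 := hz α hα1 hwα
      have hβ2 := hz β hβ1 hwβ
      have : ∀ γ ∈ B, eval v γ = 0 → γ = α₀ := by
        intro γ hγ h0
        rcases Finset.mem_insert.mp hγ with h | h
        · exact h
        · exact absurd h0 (Finset.mem_filter.mp h).2
      exact hne ((this α hα hα2).trans (this β hβ hβ2).symm)
    · intro α hα
      exact hdP α (hBA α hα)
  have hP0 : P = 0 := by
    obtain ⟨q, hq⟩ := hprod
    have hprodhom : (∏ α ∈ B, π α).IsHomogeneous B.card := by
      have := IsHomogeneous.prod B (fun α => π α) (fun _ => 1) (fun i hi => hπ1 i (hBA i hi))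
      simpa using this
    have hPhom : P.IsHomogeneous (1 + r) := by
      rw [hP]
      exact ((((((hy1 _).mul (ha1 _)).sub ((hy1 _).mul (ha1 _))).C_mul _).add
        ((((hy1 _).mul (ha1 _)).sub ((hy1 _).mul (ha1 _))).C_mul _)).add
        ((((hy1 _).mul (ha1 _)).sub ((hy1 _).mul (ha1 _))).C_mul _))
    have hq0 : q = 0 := by
      apply hom_quot_lt hprodhom (Finset.prod_ne_zero_iff.mpr fun α hα => hπ0 α (hBA α hα))
        (hq ▸ hPhom)
      omega
    rw [hq, hq0, mul_zero]
  have hα₀1 := (hA.1 α₀ (hmem α₀ hα₀)).2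
  obtain ⟨c, hc⟩ := hπdvd α₀ hα₀
  have hac : ∀ k, a k = c * y k := by
    intro k
    obtain ⟨e, he, -⟩ := hcr α₀ hα₀1 k
    rw [hP0, hc] at he
    apply mul_left_cancel₀ (hπ0 α₀ hα₀)
    linear_combination - he
  have hchom : (π α₀ * c).IsHomogeneous r := by
    rw [← hc, ← hπD α₀ hα₀1]
    rw [applyDer_lin hα₀1]
    simp only [map_add, map_mul, hπC, mul_comm _ (C _)]
    exact (((ha1 0).C_mul _).add ((ha1 1).C_mul _)).add ((ha1 2).C_mul _)
  have hex : ∀ k, ∃ t, θ k = c * X k + L * t := by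
    intro k
    obtain ⟨t, ht⟩ := hmod (θ k)
    refine ⟨t - c * C (u k), ?_⟩
    have h1 : π (θ k) = c * (X k - L * C (u k)) := hac k
    linear_combination ht + h1
  choose θ' hθ' using hex
  have hNE' : NE θ' := by
    obtain ⟨i, j, hij⟩ := hNE
    refine ⟨i, j, fun h => hij ?_⟩
    rw [hθ' i, hθ' j]
    linear_combination L * h
  rcases Nat.eq_zero_or_pos r with h0 | h0
  · exfalso
    subst h0
    have hc0 : c = 0 := hom_quot_lt (hπ1 α₀ hα₀) (hπ0 α₀ hα₀) hchom one_pos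
    have : ∀ k, θ' k = 0 := by
      intro k
      apply hom_quot_lt hL1 hL0 (n := 0) _ one_pos
      have := hh k
      rw [hθ' k, hc0, zero_mul, zero_add] at this
      exact this
    obtain ⟨i, j, hij⟩ := hNE'
    exact hij (by rw [this, this]; simp)
  · obtain ⟨s, rfl⟩ : ∃ s, r = 1 + s := ⟨r - 1, by omega⟩
    have hcs : c.IsHomogeneous s := hom_quot' (hπ1 α₀ hα₀) (hπ0 α₀ hα₀) hchom
    refine ⟨s, by omega, θ', hNE', fun k => ?_, fun α hα => ?_⟩
    · apply hom_quot' hL1 hL0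
      have e : L * θ' k = θ k - X k * c := by rw [hθ' k]; ring
      rw [e]
      exact (hh k).sub ((isHomogeneous_X K k).mul hcs)
    · have hα1 := (hA.1 α (hmem α hα))
      have hd : α ∣ L * applyDer θ' α := by
        have e : L * applyDer θ' α = applyDer θ α - α * c := by
          rw [applyDer_lin hα1.2, applyDer_lin hα1.2, hθ' 0, hθ' 1, hθ' 2]
          linear_combination c * hlin3 α hα1.2
        rw [e]
        exact dvd_sub (hdv α (hmem α hα)) (dvd_mul_right _ _)
      refine ((lin_prime hα1.2 hα1.1).dvd_or_dvd hd).resolve_left ?_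
      exact not_dvd_of_ne hA (hmem α hα) hLm (hneL α hα)

/-- A form vanishing at the common zero `v` of two independent forms vanishes at every
common zero of these. -/
lemma three_forms {α β γ : MvPolynomial (Fin 3) K} (hα : α.IsHomogeneous 1)
    (hβ : β.IsHomogeneous 1) (hβ0 : β ≠ 0) (hn : ∀ c : K, α ≠ c • β)
    (hγ : γ.IsHomogeneous 1) {v w : Fin 3 → K} (hv : v ≠ 0)
    (hαv : eval v α = 0) (hβv : eval v β = 0) (hγv : eval v γ = 0)
    (hαw : eval w α = 0) (hβw : eval w β = 0) (hγw : eval w γ ≠ 0) : False := by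
  rw [eval_lin hα] at hαv hαw
  rw [eval_lin hβ] at hβv hβw
  rw [eval_lin hγ] at hγv hγw
  have hdet : ∀ i, ((lc α 1 * lc β 2 - lc α 2 * lc β 1) * lc γ 0
      + (lc α 2 * lc β 0 - lc α 0 * lc β 2) * lc γ 1
      + (lc α 0 * lc β 1 - lc α 1 * lc β 0) * lc γ 2) * v i = 0 := by
    intro i
    fin_cases i <;> simp only [Fin.zero_eta, Fin.mk_one, Fin.reduceFinMk]
    · linear_combination (lc β 1 * lc γ 2 - lc β 2 * lc γ 1) * hαv
        + (lc γ 1 * lc α 2 - lc γ 2 * lc α 1) * hβv + (lc α 1 * lc β 2 - lc α 2 * lc β 1) * hγv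
    · linear_combination (lc β 2 * lc γ 0 - lc β 0 * lc γ 2) * hαv
        + (lc γ 2 * lc α 0 - lc γ 0 * lc α 2) * hβv + (lc α 2 * lc β 0 - lc α 0 * lc β 2) * hγv
    · linear_combination (lc β 0 * lc γ 1 - lc β 1 * lc γ 0) * hαv
        + (lc γ 0 * lc α 1 - lc γ 1 * lc α 0) * hβv + (lc α 0 * lc β 1 - lc α 1 * lc β 0) * hγv
  obtain ⟨k, hk⟩ := Function.ne_iff.mp hv
  have hD := (mul_eq_zero.mp (hdet k)).resolve_right hk
  -- cross product times `γ(w)` equals determinant times `w`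
  have e0 : (lc α 1 * lc β 2 - lc α 2 * lc β 1) = 0 := by
    refine (mul_eq_zero.mp (?_ : _ * (lc γ 0 * w 0 + lc γ 1 * w 1 + lc γ 2 * w 2) = 0)).resolve_right hγw
    linear_combination w 0 * hD - (lc β 1 * lc γ 2 - lc β 2 * lc γ 1) * hαw
        - (lc γ 1 * lc α 2 - lc γ 2 * lc α 1) * hβw
  have e1 : (lc α 2 * lc β 0 - lc α 0 * lc β 2) = 0 := by
    refine (mul_eq_zero.mp (?_ : _ * (lc γ 0 * w 0 + lc γ 1 * w 1 + lc γ 2 * w 2) = 0)).resolve_right hγw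
    linear_combination w 1 * hD - (lc β 2 * lc γ 0 - lc β 0 * lc γ 2) * hαw
        - (lc γ 2 * lc α 0 - lc γ 0 * lc α 2) * hβw
  have e2 : (lc α 0 * lc β 1 - lc α 1 * lc β 0) = 0 := by
    refine (mul_eq_zero.mp (?_ : _ * (lc γ 0 * w 0 + lc γ 1 * w 1 + lc γ 2 * w 2) = 0)).resolve_right hγw
    linear_combination w 2 * hD - (lc β 0 * lc γ 1 - lc β 1 * lc γ 0) * hαw
        - (lc γ 0 * lc α 1 - lc γ 1 * lc α 0) * hβw
  obtain ⟨c, hc⟩ := prop_of_cross hα hβ hβ0 (by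
    intro i j
    fin_cases i <;> fin_cases j <;> simp <;> grind)
  exact hn c hc

/-- The finset of intersection points. -/
noncomputable def Pts (A : Finset (MvPolynomial (Fin 3) K)) :
    Finset (Finset (MvPolynomial (Fin 3) K)) :=
  A.powerset.filter fun T => ∃ w : Fin 3 → K, w ≠ 0 ∧ T = A.filter (fun α => eval w α = 0) ∧
      2 ≤ T.card

lemma mem_Pts {A : Finset (MvPolynomial (Fin 3) K)} {T : Finset (MvPolynomial (Fin 3) K)} :
    T ∈ Pts A ↔ ∃ w : Fin 3 → K, w ≠ 0 ∧ T = A.filter (fun α => eval w α = 0) ∧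
      2 ≤ T.card := by
  simp only [Pts, Finset.mem_filter, Finset.mem_powerset, and_iff_right_iff_imp]
  rintro ⟨w, -, rfl, -⟩
  exact Finset.filter_subset _ _

lemma tjurina_eq (A : Finset (MvPolynomial (Fin 3) K)) :
    tjurina A = ∑ T ∈ Pts A, (T.card - 1) ^ 2 := by
  have hn : ∀ j, nPoints A j = ((Pts A).filter fun T => T.card = j).card := by
    intro j
    rw [nPoints, ← Set.ncard_coe_finset]
    congr 1
    ext T
    simp only [Set.mem_ofPred_eq, Finset.coe_filter, mem_Pts]
    constructor
    · rintro ⟨w, h1, h2, h3, h4⟩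
      exact ⟨⟨w, h1, h2, h3⟩, h4⟩
    · rintro ⟨⟨w, h1, h2, h3⟩, h4⟩
      exact ⟨w, h1, h2, h3, h4⟩
  rw [tjurina, ← Finset.sum_fiberwise_of_maps_to (s := Pts A)
    (t := Finset.range (A.card + 1)) (g := Finset.card)]
  · refine Finset.sum_congr rfl fun j _ => ?_
    rw [hn, Finset.sum_congr rfl (g := fun _ => (j - 1) ^ 2)]
    · simp
    · intro T hT
      rw [(Finset.mem_filter.mp hT).2]
  · intro T hT
    have : T ⊆ A := Finset.mem_powerset.mp (Finset.mem_filter.mp hT).1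
    have := Finset.card_le_card this
    simp; omega

lemma eval_smul_lin {γ : MvPolynomial (Fin 3) K} (hγ : γ.IsHomogeneous 1) (t : K)
    (v : Fin 3 → K) : eval (t • v) γ = t * eval v γ := by
  rw [eval_lin hγ, eval_lin hγ]
  simp only [Pi.smul_apply, smul_eq_mul]; ring

lemma tjurina_insert (A' : Finset (MvPolynomial (Fin 3) K))
    (v : Fin 3 → K) (hv : v ≠ 0)
    (m' : ℕ) (hm' : m' = (A'.filter fun α => eval v α = 0).card)
    (hm2 : 2 ≤ m')
    (L : MvPolynomial (Fin 3) K) (hL : L ∉ A')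
    (hA : IsArrangement (insert L A')) (hLv : eval v L = 0)
    (hgen : ∀ w : Fin 3 → K, w ≠ 0 → eval w L = 0 →
      2 ≤ (A'.filter fun α => eval w α = 0).card → ∃ c : K, w = c • v) :
    tjurina (insert L A') = tjurina A' + A'.card + m' - 1 := by
  have hLm := Finset.mem_insert_self L A'
  obtain ⟨hL0, hL1⟩ := hA.1 L hLm
  have hmem : ∀ α ∈ A', α ∈ insert L A' := fun α h => Finset.mem_insert_of_mem h
  have hneL : ∀ α ∈ A', α ≠ L := fun α h e => hL (e ▸ h)
  have hnp : ∀ α ∈ A', ∀ c : K, α ≠ c • L := fun α h => hA.2 α (hmem α h) L hLm (hneL α h)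
  set Tp := A'.filter fun α => eval v α = 0 with hTp
  set N := A'.filter fun α => ¬ eval v α = 0 with hN
  have hcard : m' + N.card = A'.card := by
    rw [hm', hTp, hN]; exact Finset.card_filter_add_card_filter_not _
  have hfil : ∀ (t : K), t ≠ 0 → (A'.filter fun α => eval (t • v) α = 0) = Tp := by
    intro t ht
    apply Finset.filter_congr
    intro α hα
    rw [eval_smul_lin (hA.1 α (hmem α hα)).2]
    simp [ht]
  have hTpm : Tp ∈ Pts A' := mem_Pts.mpr ⟨v, hv, rfl, by omega⟩
  have hLT : ∀ T ∈ Pts A', L ∉ T := by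
    intro T hT h
    obtain ⟨w, -, rfl, -⟩ := mem_Pts.mp hT
    exact hL (Finset.mem_filter.mp h).1
  have hLTp : L ∉ Tp := hLT Tp hTpm
  have hPts : Pts (insert L A') = (Pts A').erase Tp ∪
      insert (insert L Tp) (N.image fun α => {L, α}) := by
    ext T
    simp only [Finset.mem_union, Finset.mem_erase, Finset.mem_insert, Finset.mem_image]
    constructor
    · intro hT
      obtain ⟨w, hw, hTw, hc⟩ := mem_Pts.mp hT
      rw [Finset.filter_insert] at hTw
      by_cases hwL : eval w L = 0
      · rw [if_pos hwL] at hTw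
        right
        by_cases h2 : 2 ≤ (A'.filter fun α => eval w α = 0).card
        · left
          obtain ⟨t, rfl⟩ := hgen w hw hwL h2
          have ht : t ≠ 0 := by rintro rfl; exact hw (by simp)
          rw [hTw, hfil t ht]
        · right
          have hLn : L ∉ A'.filter fun α => eval w α = 0 :=
            fun h => hL (Finset.mem_filter.mp h).1
          rw [hTw, Finset.card_insert_of_notMem hLn] at hc
          obtain ⟨α, hα⟩ := Finset.card_eq_one.mp (show (A'.filter fun α => eval w α = 0).card = 1 by omega)
          have hαm : α ∈ A'.filter fun α => eval w α = 0 := by rw [hα]; simp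
          obtain ⟨hαA, hαw⟩ := Finset.mem_filter.mp hαm
          refine ⟨α, Finset.mem_filter.mpr ⟨hαA, fun hαv => ?_⟩, by rw [hTw, hα]⟩
          -- `v` and `w` are both common zeros of `α` and `L`
          obtain ⟨β, hβ, hne⟩ := Finset.exists_mem_ne (s := Tp) (by omega) α
          have hβA := (Finset.mem_filter.mp hβ).1
          have hβv := (Finset.mem_filter.mp hβ).2
          have hβw : eval w β = 0 := by
            by_contra hβw
            exact three_forms (hA.1 α (hmem α hαA)).2 hL1 hL0 (hnp α hαA)
              (hA.1 β (hmem β hβA)).2 hv hαv hLv hβv hαw hwL hβw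
          have : β ∈ A'.filter fun α => eval w α = 0 := Finset.mem_filter.mpr ⟨hβA, hβw⟩
          rw [hα, Finset.mem_singleton] at this
          exact hne this
      · rw [if_neg hwL] at hTw
        left
        refine ⟨?_, mem_Pts.mpr ⟨w, hw, hTw, hc⟩⟩
        intro hTT
        -- two distinct forms vanish at `v` and `w`
        obtain ⟨α, hα, β, hβ, hne⟩ := Finset.one_lt_card.mp (show 1 < T.card by omega)
        have hα1 := hα
        have hβ1 := hβ
        rw [hTT] at hα hβ
        rw [hTw] at hα1 hβ1
        obtain ⟨hαA, hαv⟩ := Finset.mem_filter.mp hα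
        obtain ⟨hβA, hβv⟩ := Finset.mem_filter.mp hβ
        have hαw := (Finset.mem_filter.mp hα1).2
        have hβw := (Finset.mem_filter.mp hβ1).2
        exact three_forms (hA.1 α (hmem α hαA)).2 (hA.1 β (hmem β hβA)).2 (hA.1 β (hmem β hβA)).1
          (hA.2 α (hmem α hαA) β (hmem β hβA) hne) hL1 hv hαv hβv hLv hαw hβw hwL
    · rintro (⟨hne, hT⟩ | rfl | ⟨α, hα, rfl⟩)
      · obtain ⟨w, hw, hTw, hc⟩ := mem_Pts.mp hT
        refine mem_Pts.mpr ⟨w, hw, ?_, hc⟩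
        rw [Finset.filter_insert, if_neg, ← hTw]
        intro hwL
        obtain ⟨t, rfl⟩ := hgen w hw hwL (hTw ▸ hc)
        have ht : t ≠ 0 := by rintro rfl; exact hw (by simp)
        exact hne (by rw [hTw, hfil t ht])
      · refine mem_Pts.mpr ⟨v, hv, ?_, ?_⟩
        · rw [Finset.filter_insert, if_pos hLv]
        · rw [Finset.card_insert_of_notMem hLTp]; omega
      · obtain ⟨hαA, hαv⟩ := Finset.mem_filter.mp hα
        have hα1 := (hA.1 α (hmem α hαA)).2
        obtain ⟨w, hw, hwα, hwL⟩ := exists_common_zero hα1 hL1 hL0 (hnp α hαA)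
        refine mem_Pts.mpr ⟨w, hw, ?_, ?_⟩
        · rw [Finset.filter_insert, if_pos hwL]
          congr 1
          ext β
          rw [Finset.mem_singleton, Finset.mem_filter]
          constructor
          · rintro rfl; exact ⟨hαA, hwα⟩
          · rintro ⟨hβA, hβw⟩
            by_contra hne
            obtain ⟨t, rfl⟩ := hgen w hw hwL (by
              rw [← Finset.card_pair hne]
              apply Finset.card_le_card
              intro γ hγ
              rcases Finset.mem_insert.mp hγ with rfl | hγ
              · exact Finset.mem_filter.mpr ⟨hβA, hβw⟩
              · rw [Finset.mem_singleton] at hγ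
                subst hγ
                exact Finset.mem_filter.mpr ⟨hαA, hwα⟩)
            rw [eval_smul_lin hα1] at hwα
            rcases mul_eq_zero.mp hwα with h | h
            · exact hw (by simp [h])
            · exact hαv h
        · rw [Finset.card_pair (hneL α hαA).symm]
  have hdisj : Disjoint ((Pts A').erase Tp) (insert (insert L Tp) (N.image fun α => {L, α})) := by
    rw [Finset.disjoint_left]
    intro T hT hT'
    apply hLT T (Finset.mem_of_mem_erase hT)
    rcases Finset.mem_insert.mp hT' with rfl | h
    · exact Finset.mem_insert_self _ _
    · obtain ⟨α, -, rfl⟩ := Finset.mem_image.mp h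
      exact Finset.mem_insert_self _ _
  have hnotin : insert L Tp ∉ N.image fun α => ({L, α} : Finset (MvPolynomial (Fin 3) K)) := by
    intro h
    obtain ⟨α, -, hα⟩ := Finset.mem_image.mp h
    have h1 := congrArg Finset.card hα
    rw [Finset.card_insert_of_notMem hLTp] at h1
    have := Finset.card_le_two (a := L) (b := α)
    omega
  have hinj : Set.InjOn (fun α => ({L, α} : Finset (MvPolynomial (Fin 3) K))) N := by
    intro α hα β hβ h
    have hαA := (Finset.mem_filter.mp hα).1
    have : α ∈ ({L, β} : Finset (MvPolynomial (Fin 3) K)) := by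
      rw [← (show ({L, α} : Finset (MvPolynomial (Fin 3) K)) = {L, β} from h)]; simp
    rcases Finset.mem_insert.mp this with h | h
    · exact absurd h (hneL α hαA)
    · exact Finset.mem_singleton.mp h
  have hs : ∑ α ∈ N, (({L, α} : Finset (MvPolynomial (Fin 3) K)).card - 1) ^ 2 = N.card := by
    rw [Finset.sum_congr rfl (g := fun _ => 1)]
    · simp
    · intro α hα
      rw [Finset.card_pair (hneL α (Finset.mem_filter.mp hα).1).symm]
      norm_num
  rw [tjurina_eq, tjurina_eq, hPts, Finset.sum_union hdisj, Finset.sum_insert hnotin,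
    Finset.sum_image hinj, hs, ← Finset.sum_erase_add _ _ hTpm, Finset.card_insert_of_notMem hLTp,
    ← hm', ← hcard]
  obtain ⟨k, rfl⟩ : ∃ k, m' = k + 1 := ⟨m' - 1, by omega⟩
  simp only [Nat.add_sub_cancel]
  have : (k + 1) ^ 2 = k ^ 2 + 2 * k + 1 := by ring
  omega

/-- Let `A'` be an essential line arrangement of `d'` lines in `P^2`,
let `p` (represented by `v ≠ 0`) be an intersection point of `A'` of maximal
multiplicity `m' = m(A')`, and let `L` be a line not in `A'` which passes through `p`
and contains no intersection point of `A'` other than `p` (a generic line through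
`p`). Set `A = A' ∪ {L}`, `r' = r(A')`. Then:
(1) `τ(A) = τ(A') + d' + m' − 1`;
(2) if `r' < d' − m'`, then `r(A) = r' + 1`;
(3) if `r' = d' − m'`, then `r(A) = r'`. -/
theorem generic_line_through_maximal_point (A' : Finset (MvPolynomial (Fin 3) K))
    (hA' : IsArrangement A') (hA'ess : IsEssential A')
    (v : Fin 3 → K) (hv : v ≠ 0)
    (m' : ℕ) (hm' : m' = (A'.filter fun α => eval v α = 0).card)
    (hm2 : 2 ≤ m') (hmax : m' = maxMult A')
    (L : MvPolynomial (Fin 3) K) (hL : L ∉ A')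
    (hA : IsArrangement (insert L A')) (hLv : eval v L = 0)
    (hgen : ∀ w : Fin 3 → K, w ≠ 0 → eval w L = 0 →
      2 ≤ (A'.filter fun α => eval w α = 0).card → ∃ c : K, w = c • v) :
    tjurina (insert L A') = tjurina A' + A'.card + m' - 1 ∧
    (mdr A' < A'.card - m' → mdr (insert L A') = mdr A' + 1) ∧
    (mdr A' = A'.card - m' → mdr (insert L A') = mdr A') := by
  refine ⟨tjurina_insert A' v hv m' hm' hm2 L hL hA hLv hgen, ?_⟩
  have hLm := Finset.mem_insert_self L A'
  obtain ⟨hL0, hL1⟩ := hA.1 L hLm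
  obtain ⟨α₀, hα₀⟩ : (A'.filter fun α => eval v α = 0).Nonempty :=
    Finset.card_pos.mp (by omega)
  obtain ⟨hα₀A, hα₀v⟩ := Finset.mem_filter.mp hα₀
  have hcard : (A'.filter fun α => eval v α = 0).card + (A'.filter fun α => eval v α ≠ 0).card
      = A'.card := Finset.card_filter_add_card_filter_not _
  have hn : (A'.filter fun α => eval v α ≠ 0).card = A'.card - m' := by omega
  have hpen := goodDeg_pencil hA v hv
  rw [Finset.filter_insert, if_neg (by simpa using hLv), hn] at hpen
  have hpen' := goodDeg_mono hpen
  have e' := mdr_eq hA' ⟨α₀, hα₀A⟩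
  have e := mdr_eq hA ⟨L, hLm⟩
  have hg' : GoodDeg A' (mdr A') := by rw [e']; exact Nat.sInf_mem (s := {r | GoodDeg A' r}) ⟨_, hpen'⟩
  have hg : GoodDeg (insert L A') (mdr (insert L A')) := by rw [e]; exact Nat.sInf_mem (s := {r | GoodDeg (insert L A') r}) ⟨_, hpen⟩
  have hle' : ∀ r, GoodDeg A' r → mdr A' ≤ r := fun r h => by rw [e']; exact Nat.sInf_le h
  have hle : ∀ r, GoodDeg (insert L A') r → mdr (insert L A') ≤ r :=
    fun r h => by rw [e]; exact Nat.sInf_le h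
  have h1 := hle' _ (goodDeg_mono hg)
  have h2 := hle _ (goodDeg_mul hL0 hL1 hg')
  constructor
  · intro hlt
    by_contra hne
    have heq : mdr (insert L A') = mdr A' := by omega
    rw [heq] at hg
    obtain ⟨s, hs, hgs⟩ := descent hL hA v α₀ hα₀A hα₀v hgen (by omega) hg
    have := hle' s hgs
    omega
  · intro heq
    have := hle _ hpen
    omega
end

section
/- Let A be an essential line arrangement of d ≥ 2 lines in P^2 having only double and triple intersection points (n_j(A) = 0 for all j ≥ 4), with n_3 = n_3(A) triple points. Then: (1) if n_3 = 0, then r(A) = d − 2; (2) if 1 ≤ n_3 ≤ 3, then r(A) = d − 3. -/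
open Classical MvPolynomial

variable {K : Type*} [Field K] [CharZero K] {ℓ : ℕ}

set_option linter.unusedSectionVars false
section Helpers

theorem linform {α : MvPolynomial (Fin 3) K} (h : α.IsHomogeneous 1) :
    ∃ a : Fin 3 → K, α = ∑ i, C (a i) * X i := by
  have hc : ∀ i, ∃ c : K, pderiv i α = C c := fun i => by
    have h1 : (pderiv i α).IsHomogeneous 0 := h.pderiv
    rw [← totalDegree_zero_iff_isHomogeneous, totalDegree_eq_zero_iff_eq_C] at h1
    exact ⟨_, h1⟩
  choose a ha using hc
  refine ⟨a, ?_⟩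
  have := h.sum_X_mul_pderiv
  rw [one_smul] at this
  rw [← this]
  exact Finset.sum_congr rfl fun i _ => by rw [ha, mul_comm]

theorem pderiv_linform (a : Fin 3 → K) (i : Fin 3) :
    pderiv i (∑ j, C (a j) * X j) = C (a i) := by
  simp [pderiv_X, Pi.single_apply]

theorem eval_linform (a v : Fin 3 → K) :
    eval v (∑ j, C (a j) * X j) = ∑ j, a j * v j := by
  simp

theorem lin_dvd_of_vanish {α p : MvPolynomial (Fin 3) K} (h : α.IsHomogeneous 1) (h0 : α ≠ 0)
    (hp : ∀ v, eval v α = 0 → eval v p = 0) : α ∣ p := by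
  obtain ⟨a, rfl⟩ := linform h
  obtain ⟨k, hk⟩ : ∃ k, a k ≠ 0 := by
    by_contra! hh
    exact h0 (by simp [hh])
  set α : MvPolynomial (Fin 3) K := ∑ i, C (a i) * X i with hα
  let Y : Fin 3 → MvPolynomial (Fin 3) K := fun i => X i - C (if i = k then (a k)⁻¹ else 0) * α
  have hY : aeval Y p = 0 := by
    apply MvPolynomial.funext
    intro v
    rw [map_zero]
    have e : eval v (aeval Y p) = eval (fun i => eval v (Y i)) p := by
      have : (aeval v : MvPolynomial (Fin 3) K →ₐ[K] K).comp (aeval Y) = aeval (fun i => eval v (Y i)) := by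
        apply MvPolynomial.algHom_ext
        intro i
        rw [AlgHom.comp_apply, aeval_X, aeval_X]
        rfl
      exact DFunLike.congr_fun this p
    rw [e]
    apply hp
    rw [hα, eval_linform]
    simp only [Y, map_sub, map_mul, eval_X, eval_C, mul_sub, Finset.sum_sub_distrib]
    rw [hα, eval_linform]
    simp [hk]
  rw [← Ideal.mem_span_singleton, ← Ideal.Quotient.eq_zero_iff_mem]
  have e2 : (Ideal.Quotient.mkₐ K (Ideal.span {α})).comp (aeval Y) =
      Ideal.Quotient.mkₐ K (Ideal.span {α}) := by
    apply MvPolynomial.algHom_ext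
    intro i
    simp only [AlgHom.comp_apply, aeval_X, Ideal.Quotient.mkₐ_eq_mk, Y]
    rw [Ideal.Quotient.eq]
    rw [Ideal.mem_span_singleton]
    exact ⟨- C (if i = k then (a k)⁻¹ else 0), by ring⟩
  have := DFunLike.congr_fun e2 p
  simp only [AlgHom.comp_apply, hY, map_zero, Ideal.Quotient.mkₐ_eq_mk] at this
  exact this.symm

theorem const_of_dvd {p q : MvPolynomial (Fin 3) K} {m n : ℕ} (hp : p.IsHomogeneous m)
    (hp0 : p ≠ 0) (hq : q.IsHomogeneous n) (hmn : n ≤ m) (hd : p ∣ q) : ∃ c : K, q = C c * p := by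
  by_cases hq0 : q = 0
  · exact ⟨0, by simp [hq0]⟩
  obtain ⟨w, rfl⟩ := hd
  have hw : w ≠ 0 := right_ne_zero_of_mul hq0
  have h1 := totalDegree_mul_of_isDomain hp0 hw
  rw [hq.totalDegree hq0, hp.totalDegree hp0] at h1
  have h2 : w.totalDegree = 0 := by omega
  rw [totalDegree_eq_zero_iff_eq_C] at h2
  exact ⟨_, by rw [mul_comm, ← h2]⟩

theorem lin_irred {α : MvPolynomial (Fin 3) K} (h : α.IsHomogeneous 1) (h0 : α ≠ 0) :
    Irreducible α := by
  apply irreducible_of_totalDegree_eq_one (h.totalDegree h0)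
  intro x hx
  rw [isUnit_iff_ne_zero]
  rintro rfl
  apply h0
  ext i
  simpa using hx i

theorem relprime {A : Finset (MvPolynomial (Fin 3) K)} (hA : IsArrangement A)
    {α β : MvPolynomial (Fin 3) K} (ha : α ∈ A) (hb : β ∈ A) (hne : α ≠ β) : IsRelPrime α β := by
  obtain ⟨ha0, ha1⟩ := hA.1 α ha
  obtain ⟨hb0, hb1⟩ := hA.1 β hb
  rw [(lin_irred ha1 ha0).isRelPrime_iff_not_dvd]
  intro hd
  obtain ⟨c, hc⟩ := const_of_dvd ha1 ha0 hb1 le_rfl hd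
  exact hA.2 β hb α ha hne.symm c (by rw [hc, smul_eq_C_mul])

theorem eval_smul_hom {p : MvPolynomial (Fin 3) K} {m : ℕ} (hp : p.IsHomogeneous m) (r : K)
    (u : Fin 3 → K) : eval (r • u) p = r ^ m * eval u p := by
  rw [eval_eq, eval_eq, Finset.mul_sum]
  refine Finset.sum_congr rfl fun d hd => ?_
  have h := hp (mem_support_iff.mp hd)
  simp only [Pi.smul_apply, smul_eq_mul, mul_pow, Finset.prod_mul_distrib]
  rw [Finset.prod_pow_eq_pow_sum]
  have : ∑ i ∈ d.support, d i = m := by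
    rw [← h, Finsupp.weight_apply]
    simp [Finsupp.sum]
  rw [this]; ring

/-- a homogeneous polynomial with more zeros than its degree on a line is divisible by the form. -/
theorem dvd_of_many {α p : MvPolynomial (Fin 3) K} (h : α.IsHomogeneous 1) (h0 : α ≠ 0)
    {m : ℕ} (hp : p.IsHomogeneous m) {ι : Type*} (s : Finset ι) (hs : m < s.card)
    (v : ι → Fin 3 → K) (hspan : ∀ i ∈ s, ∀ w, eval w α = 0 → (∃ c : K, w = c • v i) ∨
      ∀ u, eval u α = 0 → ∃ a b : K, u = a • w + b • v i)
    (hv0 : ∀ i ∈ s, v i ≠ 0)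
    (hvα : ∀ i ∈ s, eval (v i) α = 0)
    (hinj : ∀ i ∈ s, ∀ j ∈ s, (∃ c : K, v i = c • v j) → i = j)
    (hz : ∀ i ∈ s, ∀ c : K, eval (c • v i) p = 0) : α ∣ p := by
  apply lin_dvd_of_vanish h h0
  intro w hw
  by_cases hpar : ∃ i ∈ s, ∃ c : K, w = c • v i
  · obtain ⟨i, hi, c, rfl⟩ := hpar
    exact hz i hi c
  push Not at hpar
  obtain ⟨i0, hi0⟩ : s.Nonempty := Finset.card_pos.mp (by omega)
  have hsp : ∀ i ∈ s, ∃ t b : K, b ≠ 0 ∧ v i = b • (t • w + v i0) := by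
    intro i hi
    rcases hspan i0 hi0 w hw with ⟨c, hc⟩ | hh
    · exact absurd hc (hpar i0 hi0 c)
    obtain ⟨a, b, hab⟩ := hh (v i) (hvα i hi)
    have hb : b ≠ 0 := by
      rintro rfl
      have ha : a ≠ 0 := by
        rintro rfl
        exact hv0 i hi (by simpa using hab)
      apply hpar i hi a⁻¹
      rw [hab]; simp [smul_smul, ha]
    refine ⟨b⁻¹ * a, b, hb, ?_⟩
    rw [smul_add, smul_smul, mul_inv_cancel_left₀ hb]
    exact hab
  have hsp' : ∀ i, ∃ t b : K, i ∈ s → b ≠ 0 ∧ v i = b • (t • w + v i0) := fun i => by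
    by_cases hi : i ∈ s
    · obtain ⟨t, b, hh⟩ := hsp i hi
      exact ⟨t, b, fun _ => hh⟩
    · exact ⟨0, 0, fun h => absurd h hi⟩
  choose t b htb using hsp'
  let P : Polynomial K := aeval (fun k => Polynomial.C (w k) * Polynomial.X + Polynomial.C (v i0 k)) p
  have hPe : ∀ r, P.eval r = eval (r • w + v i0) p := by
    intro r
    have : (Polynomial.aeval r).comp (aeval (fun k => Polynomial.C (w k) * Polynomial.X + Polynomial.C (v i0 k))) = aeval (r • w + v i0) := by
      apply MvPolynomial.algHom_ext
      intro k
      rw [AlgHom.comp_apply, aeval_X, aeval_X]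
      simp only [map_add, map_mul, Polynomial.aeval_C, Polynomial.aeval_X, Pi.add_apply,
        Pi.smul_apply, smul_eq_mul, Algebra.algebraMap_self, RingHom.id_apply]
      ring
    have := DFunLike.congr_fun this p
    exact this
  have hPd : P.natDegree ≤ m := by
    have := MvPolynomial.aeval_natDegree_le (m := m) (n := 1) p hp.totalDegree_le
      (fun k => Polynomial.C (w k) * Polynomial.X + Polynomial.C (v i0 k))
      (fun k => Polynomial.natDegree_linear_le)
    simpa using this
  have hP0 : P = 0 := by
    apply Polynomial.eq_zero_of_natDegree_lt_card_of_eval_eq_zero' P (s.image t)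
    · intro r hr
      obtain ⟨i, hi, rfl⟩ := Finset.mem_image.mp hr
      obtain ⟨hb, he⟩ := htb i hi
      rw [hPe]
      have := hz i hi (b i)⁻¹
      rwa [he, smul_smul, inv_mul_cancel₀ hb, one_smul] at this
    · rw [Finset.card_image_of_injOn]
      · omega
      · intro i hi j hj hij
        obtain ⟨hb, he⟩ := htb i hi
        obtain ⟨hb', he'⟩ := htb j hj
        apply hinj i hi j hj
        refine ⟨b i * (b j)⁻¹, ?_⟩
        rw [he', smul_smul, inv_mul_cancel_right₀ hb', ← hij, ← he]
  let R : Polynomial K := aeval (fun k => Polynomial.C (v i0 k) * Polynomial.X + Polynomial.C (w k)) p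
  have hRe : ∀ r, R.eval r = eval (r • v i0 + w) p := by
    intro r
    have : (Polynomial.aeval r).comp (aeval (fun k => Polynomial.C (v i0 k) * Polynomial.X + Polynomial.C (w k))) = aeval (r • v i0 + w) := by
      apply MvPolynomial.algHom_ext
      intro k
      rw [AlgHom.comp_apply, aeval_X, aeval_X]
      simp only [map_add, map_mul, Polynomial.aeval_C, Polynomial.aeval_X, Pi.add_apply,
        Pi.smul_apply, smul_eq_mul, Algebra.algebraMap_self, RingHom.id_apply]
      ring
    have := DFunLike.congr_fun this p
    exact this
  have hR0 : R = 0 := by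
    apply Polynomial.eq_zero_of_infinite_isRoot
    apply Set.Infinite.mono (s := {0}ᶜ)
    · intro r hr
      have hr : r ≠ 0 := hr
      rw [Set.mem_ofPred_eq, Polynomial.IsRoot, hRe]
      have e : r • v i0 + w = r • (r⁻¹ • w + v i0) := by
        rw [smul_add, smul_smul, mul_inv_cancel₀ hr, one_smul, add_comm]
      rw [e]
      have hm : eval (r • (r⁻¹ • w + v i0)) p = r ^ m * eval (r⁻¹ • w + v i0) p := by
        exact eval_smul_hom hp _ _
      rw [hm, ← hPe, hP0]; simp
    · exact (Set.finite_singleton 0).infinite_compl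
  have := hRe 0
  rw [hR0] at this
  simpa using this.symm

theorem par {v n : Fin 3 → K} (hn : n ≠ 0) (h : ∀ i j, v i * n j = v j * n i) :
    ∃ c : K, v = c • n := by
  obtain ⟨k, hk⟩ := Function.ne_iff.mp hn
  rw [Pi.zero_apply] at hk
  refine ⟨v k / n k, ?_⟩
  ext j
  rw [Pi.smul_apply, smul_eq_mul, div_mul_eq_mul_div, eq_div_iff hk]
  exact h j k

theorem meet {A : Finset (MvPolynomial (Fin 3) K)} (hA : IsArrangement A)
    {α β : MvPolynomial (Fin 3) K} (ha : α ∈ A) (hb : β ∈ A) (hne : α ≠ β) :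
    ∃ n : Fin 3 → K, n ≠ 0 ∧ eval n α = 0 ∧ eval n β = 0 ∧
      ∀ v, eval v α = 0 → eval v β = 0 → ∃ c : K, v = c • n := by
  obtain ⟨a, rfl⟩ := linform (hA.1 α ha).2
  obtain ⟨b, rfl⟩ := linform (hA.1 β hb).2
  have hb0 : b ≠ 0 := by
    rintro rfl
    exact (hA.1 _ hb).1 (by simp)
  let n : Fin 3 → K := ![a 1 * b 2 - a 2 * b 1, a 2 * b 0 - a 0 * b 2, a 0 * b 1 - a 1 * b 0]
  have hn0 : n ≠ 0 := by
    intro h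
    have e0 : a 1 * b 2 - a 2 * b 1 = 0 := congrFun h 0
    have e1 : a 2 * b 0 - a 0 * b 2 = 0 := congrFun h 1
    have e2 : a 0 * b 1 - a 1 * b 0 = 0 := congrFun h 2
    obtain ⟨c, rfl⟩ : ∃ c : K, a = c • b := by
      apply par hb0
      intro i j
      fin_cases i <;> fin_cases j <;> simp only [Fin.zero_eta, Fin.mk_one, Fin.reduceFinMk] <;>
        grind
    apply hA.2 _ ha _ hb hne c
    simp [Finset.smul_sum, smul_eq_C_mul, mul_assoc]
  refine ⟨n, hn0, ?_, ?_, ?_⟩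
  · rw [eval_linform, Fin.sum_univ_three]
    simp only [n, Matrix.cons_val]
    ring
  · rw [eval_linform, Fin.sum_univ_three]
    simp only [n, Matrix.cons_val]
    ring
  · intro v h1 h2
    rw [eval_linform, Fin.sum_univ_three] at h1 h2
    apply par hn0
    intro i j
    fin_cases i <;> fin_cases j <;>
      simp only [Fin.zero_eta, Fin.mk_one, Fin.reduceFinMk, n, Matrix.cons_val]
    · linear_combination a 2 * h2 - b 2 * h1
    · linear_combination - a 1 * h2 + b 1 * h1
    · linear_combination - a 2 * h2 + b 2 * h1
    · linear_combination a 0 * h2 - b 0 * h1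
    · linear_combination a 1 * h2 - b 1 * h1
    · linear_combination - a 0 * h2 + b 0 * h1

theorem plane_span {α : MvPolynomial (Fin 3) K} (h : α.IsHomogeneous 1) (h0 : α ≠ 0)
    {v w : Fin 3 → K} (hv0 : v ≠ 0) (hv : eval v α = 0) (hw : eval w α = 0) :
    (∃ c : K, w = c • v) ∨ ∀ u, eval u α = 0 → ∃ a b : K, u = a • w + b • v := by
  by_contra! hc
  obtain ⟨h1, u, hu, h2⟩ := hc
  obtain ⟨a, rfl⟩ := linform h
  have hli : LinearIndependent K ![v, w] := by
    rw [LinearIndependent.pair_iff' hv0]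
    intro c hc
    exact h1 c hc.symm
  have hli3 : LinearIndependent K ![u, v, w] := by
    refine linearIndependent_finCons.mpr ?_
    refine ⟨hli, ?_⟩
    simp only [Matrix.range_cons, Matrix.range_empty, Set.union_empty, Set.singleton_union]
    rw [Submodule.mem_span_pair]
    rintro ⟨x, y, hxy⟩
    exact h2 y x (by rw [← hxy, add_comm])
  have hM : IsUnit (Matrix.of ![u, v, w]) := by
    rw [← Matrix.linearIndependent_rows_iff_isUnit]
    exact hli3
  have hz : (Matrix.of ![u, v, w]).mulVec a = 0 := by
    rw [eval_linform] at hu hv hw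
    ext i
    fin_cases i
    · simpa [Matrix.mulVec, dotProduct, mul_comm] using hu
    · simpa [Matrix.mulVec, dotProduct, mul_comm] using hv
    · simpa [Matrix.mulVec, dotProduct, mul_comm] using hw
  have ha : a = 0 := by
    apply Matrix.mulVec_injective_of_isUnit hM
    rw [hz, Matrix.mulVec_zero]
  exact h0 (by simp [ha])

/-- intersection points on the line `α`. -/
noncomputable def pts (A : Finset (MvPolynomial (Fin 3) K)) (α : MvPolynomial (Fin 3) K) :
    Finset (Finset (MvPolynomial (Fin 3) K)) :=
  A.powerset.filter fun T => α ∈ T ∧ 2 ≤ T.card ∧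
    ∃ v : Fin 3 → K, v ≠ 0 ∧ T = A.filter (fun β => eval v β = 0)

/-- points of multiplicity `j`. -/
noncomputable def mpts (A : Finset (MvPolynomial (Fin 3) K)) (j : ℕ) :
    Finset (Finset (MvPolynomial (Fin 3) K)) :=
  A.powerset.filter fun T => ∃ v : Fin 3 → K, v ≠ 0 ∧ T = A.filter (fun α => eval v α = 0) ∧
      2 ≤ T.card ∧ T.card = j

theorem nPoints_eq (A : Finset (MvPolynomial (Fin 3) K)) (j : ℕ) :
    nPoints A j = (mpts A j).card := by
  rw [nPoints, ← Set.ncard_coe_finset]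
  congr 1
  ext T
  simp only [mpts, Finset.coe_filter, Finset.mem_powerset, Set.mem_ofPred_eq]
  constructor
  · rintro ⟨v, h1, h2, h3⟩
    exact ⟨h2 ▸ Finset.filter_subset _ _, v, h1, h2, h3⟩
  · exact fun h => h.2

theorem der_tangent {A : Finset (MvPolynomial (Fin 3) K)} (hA : IsArrangement A)
    {θ : Fin 3 → MvPolynomial (Fin 3) K} (h0 : applyDer θ (Qpoly A) = 0)
    {α : MvPolynomial (Fin 3) K} (ha : α ∈ A) : α ∣ applyDer θ α := by
  have hm : ∀ f g, applyDer θ (f * g) = applyDer θ f * g + f * applyDer θ g := by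
    intro f g
    simp only [applyDer, pderiv_mul, Finset.mul_sum, Finset.sum_mul, ← Finset.sum_add_distrib]
    exact Finset.sum_congr rfl fun i _ => by ring
  rw [Qpoly, ← Finset.mul_prod_erase A _ ha, hm] at h0
  have hd : α ∣ (∏ x ∈ A.erase α, x) * applyDer θ α :=
    ⟨- applyDer θ (∏ x ∈ A.erase α, x), by linear_combination h0⟩
  refine IsRelPrime.dvd_of_dvd_mul_left ?_ hd
  apply IsRelPrime.prod_right
  intro β hβ
  rw [Finset.mem_erase] at hβ
  exact relprime hA ha hβ.2 hβ.1.symm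

theorem no_rel {A : Finset (MvPolynomial (Fin 3) K)} (hA : IsArrangement A)
    {θ : Fin 3 → MvPolynomial (Fin 3) K} {e : ℕ} (hθ : ∀ j, (θ j).IsHomogeneous e)
    (h0 : applyDer θ (Qpoly A) = 0) (G : Finset (MvPolynomial (Fin 3) K)) (hGA : G ⊆ A)
    (hG : e + 1 ≤ G.card) (hpts : ∀ α ∈ G, e + 2 ≤ (pts A α).card) : θ = 0 := by
  let W : Fin 3 → Fin 3 → MvPolynomial (Fin 3) K := fun i j => X i * θ j - X j * θ i
  have hWh : ∀ i j, (W i j).IsHomogeneous (e + 1) := by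
    intro i j
    rw [add_comm]
    exact ((isHomogeneous_X K i).mul (hθ j)).sub ((isHomogeneous_X K j).mul (hθ i))
  have htan : ∀ α ∈ A, ∀ u, eval u α = 0 → eval (fun k => eval u (θ k)) α = 0 := by
    intro α ha u hu
    obtain ⟨q, hq⟩ := der_tangent hA h0 ha
    obtain ⟨a, rfl⟩ := linform (hA.1 α ha).2
    have := congrArg (eval u) hq
    rw [map_mul, hu, zero_mul] at this
    rw [eval_linform]
    simp only [applyDer, pderiv_linform] at this
    simp only [map_sum, map_mul, eval_C] at this
    rw [← this]
    exact Finset.sum_congr rfl fun i _ => by ring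
  have hdvd : ∀ i j, ∀ α ∈ G, α ∣ W i j := by
    intro i j α hαG
    have ha := hGA hαG
    obtain ⟨ha0, ha1⟩ := hA.1 α ha
    have hch : ∀ T, ∃ v : Fin 3 → K, T ∈ pts A α → α ∈ T ∧ 2 ≤ T.card ∧ v ≠ 0 ∧
        T = A.filter (fun β => eval v β = 0) := by
      intro T
      by_cases hT : T ∈ pts A α
      · obtain ⟨-, h1, h2, v, hv, h3⟩ := Finset.mem_filter.mp hT
        exact ⟨v, fun _ => ⟨h1, h2, hv, h3⟩⟩
      · exact ⟨0, fun h => absurd h hT⟩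
    choose v hv using hch
    have hvα : ∀ T ∈ pts A α, eval (v T) α = 0 := by
      intro T hT
      obtain ⟨h1, h2, h3, h4⟩ := hv T hT
      rw [h4] at h1
      exact (Finset.mem_filter.mp h1).2
    refine dvd_of_many ha1 ha0 (hWh i j) (pts A α) (hpts α hαG) v ?_ (fun T hT => (hv T hT).2.2.1)
      hvα ?_ ?_
    · intro T hT w hw
      exact plane_span ha1 ha0 (hv T hT).2.2.1 (hvα T hT) hw
    · rintro T hT T' hT' ⟨c, hc⟩
      obtain ⟨h1, h2, h3, h4⟩ := hv T hT
      obtain ⟨h1', h2', h3', h4'⟩ := hv T' hT'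
      have hc0 : c ≠ 0 := by
        rintro rfl
        exact h3 (by simpa using hc)
      rw [h4, h4']
      apply Finset.filter_congr
      intro β hβ
      rw [hc, eval_smul_hom (hA.1 β hβ).2]
      simp [hc0]
    · intro T hT c
      obtain ⟨h1, h2, h3, h4⟩ := hv T hT
      obtain ⟨β, hβT, hβ⟩ : ∃ β ∈ T, β ≠ α := Finset.exists_mem_ne (by omega) α
      rw [h4, Finset.mem_filter] at hβT
      obtain ⟨hβA, hβv⟩ := hβT
      have hu1 : eval (c • v T) α = 0 := by
        rw [eval_smul_hom ha1, hvα T hT, mul_zero]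
      have hu2 : eval (c • v T) β = 0 := by
        rw [eval_smul_hom (hA.1 β hβA).2, hβv, mul_zero]
      generalize c • v T = u at hu1 hu2
      obtain ⟨n, -, -, -, hn⟩ := meet hA ha hβA hβ.symm
      obtain ⟨c1, hc1⟩ := hn u hu1 hu2
      obtain ⟨c2, hc2⟩ := hn _ (htan α ha u hu1) (htan β hβA u hu2)
      have e1 : ∀ k, u k = c1 * n k := fun k => by rw [hc1]; rfl
      have e2 : ∀ k, eval u (θ k) = c2 * n k := fun k => congrFun hc2 k
      simp only [W, map_sub, map_mul, eval_X, e1, e2]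
      ring
  have hP0 : ∏ α ∈ G, α ≠ 0 := Finset.prod_ne_zero_iff.mpr fun α h => (hA.1 α (hGA h)).1
  have hPh : (∏ α ∈ G, α).IsHomogeneous G.card := by
    have := IsHomogeneous.prod G (fun α => α) (fun _ => 1) fun α h => (hA.1 α (hGA h)).2
    simpa using this
  have hconst : ∀ i j, ∃ c : K, W i j = C c * ∏ α ∈ G, α := by
    intro i j
    apply const_of_dvd hPh hP0 (hWh i j) hG
    apply Finset.prod_dvd_of_isRelPrime
    · intro α hα β hβ hne
      exact relprime hA (hGA hα) (hGA hβ) hne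
    · exact hdvd i j
  choose c hc using hconst
  have hlin : C (c 1 2) * X 0 + C (c 2 0) * X 1 + C (c 0 1) * X 2 = (0 : MvPolynomial (Fin 3) K) := by
    apply mul_right_cancel₀ hP0
    have : X 0 * W 1 2 + X 1 * W 2 0 + X 2 * W 0 1 = 0 := by simp only [W]; ring
    rw [hc, hc, hc] at this
    linear_combination this
  have hc12 : c 1 2 = 0 := by simpa using congrArg (eval ![1, 0, 0]) hlin
  have hc20 : c 2 0 = 0 := by simpa using congrArg (eval ![0, 1, 0]) hlin
  have hc01 : c 0 1 = 0 := by simpa using congrArg (eval ![0, 0, 1]) hlin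
  have hW12 : W 1 2 = 0 := by rw [hc, hc12]; simp
  have hW20 : W 2 0 = 0 := by rw [hc, hc20]; simp
  have hW01 : W 0 1 = 0 := by rw [hc, hc01]; simp
  have hW : ∀ i j, X i * θ j = X j * θ i := by
    simp only [W] at hW12 hW20 hW01
    intro i j
    fin_cases i <;> fin_cases j <;> simp only [Fin.zero_eta, Fin.mk_one, Fin.reduceFinMk] <;> grind
  have hfh : (Qpoly A).IsHomogeneous A.card := by
    have := IsHomogeneous.prod A (fun α => α) (fun _ => 1) fun α h => (hA.1 α h).2
    simpa [Qpoly] using this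
  have hf0 : Qpoly A ≠ 0 := Finset.prod_ne_zero_iff.mpr fun α h => (hA.1 α h).1
  have hcard : A.card ≠ 0 := by
    have := Finset.card_le_card hGA
    omega
  funext i
  have h1 : θ i * (A.card • Qpoly A) = 0 := by
    rw [← hfh.sum_X_mul_pderiv]
    have : X i * applyDer θ (Qpoly A) = 0 := by rw [h0, mul_zero]
    rw [← this, applyDer, Finset.mul_sum, Finset.mul_sum]
    exact Finset.sum_congr rfl fun j _ => by rw [← mul_assoc, ← mul_assoc, hW i j]; ring
  rcases mul_eq_zero.mp h1 with h | h
  · exact h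
  · rw [nsmul_eq_mul, mul_eq_zero] at h
    rcases h with h | h
    · exact absurd (by exact_mod_cast h) hcard
    · exact absurd h hf0

theorem count {A : Finset (MvPolynomial (Fin 3) K)} (hA : IsArrangement A)
    {α : MvPolynomial (Fin 3) K} (ha : α ∈ A) (h3 : ∀ T ∈ pts A α, T.card ≤ 3) :
    A.card - 1 ≤ (pts A α).card + ((mpts A 3).filter (fun T => α ∈ T)).card := by
  have hsub : A.erase α ⊆ (pts A α).biUnion fun T => T.erase α := by
    intro β hβ
    rw [Finset.mem_erase] at hβ
    obtain ⟨n, hn0, hnα, hnβ, -⟩ := meet hA ha hβ.2 hβ.1.symm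
    have m1 : α ∈ A.filter (fun γ => eval n γ = 0) := Finset.mem_filter.mpr ⟨ha, hnα⟩
    have m2 : β ∈ A.filter (fun γ => eval n γ = 0) := Finset.mem_filter.mpr ⟨hβ.2, hnβ⟩
    rw [Finset.mem_biUnion]
    refine ⟨A.filter (fun γ => eval n γ = 0), ?_, Finset.mem_erase.mpr ⟨hβ.1, m2⟩⟩
    refine Finset.mem_filter.mpr ⟨Finset.mem_powerset.mpr (Finset.filter_subset _ _), m1, ?_,
      n, hn0, rfl⟩
    exact Finset.one_lt_card.mpr ⟨α, m1, β, m2, hβ.1.symm⟩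
  have h1 := (Finset.card_le_card hsub).trans Finset.card_biUnion_le
  rw [Finset.card_erase_of_mem ha] at h1
  refine h1.trans ?_
  have h2 : ∑ T ∈ pts A α, (T.erase α).card ≤ ∑ T ∈ pts A α, (1 + if T.card = 3 then 1 else 0) := by
    apply Finset.sum_le_sum
    intro T hT
    have h4 := h3 T hT
    rw [Finset.card_erase_of_mem (Finset.mem_filter.mp hT).2.1]
    split_ifs <;> omega
  refine h2.trans ?_
  rw [Finset.sum_add_distrib, Finset.sum_boole]
  simp only [Finset.sum_const, smul_eq_mul, mul_one, Nat.cast_id, add_le_add_iff_left]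
  apply Finset.card_le_card
  intro T hT
  obtain ⟨hT, hc⟩ := Finset.mem_filter.mp hT
  obtain ⟨h5, h6, h7, v, hv, hTv⟩ := Finset.mem_filter.mp hT
  exact Finset.mem_filter.mpr ⟨Finset.mem_filter.mpr ⟨h5, v, hv, hTv, h7, hc⟩, h6⟩

theorem bad_le {A : Finset (MvPolynomial (Fin 3) K)} (hA : IsArrangement A)
    (h : (mpts A 3).card ≤ 3) :
    (A.filter fun α => 2 ≤ ((mpts A 3).filter (fun T => α ∈ T)).card).card ≤ 3 := by
  have hsub : (A.filter fun α => 2 ≤ ((mpts A 3).filter (fun T => α ∈ T)).card) ⊆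
      ((mpts A 3).powersetCard 2).biUnion fun s => A.filter fun α => ∀ T ∈ s, α ∈ T := by
    intro α hα
    obtain ⟨ha, h2⟩ := Finset.mem_filter.mp hα
    obtain ⟨s, hs, hs2⟩ := Finset.exists_subset_card_eq h2
    rw [Finset.mem_biUnion]
    refine ⟨s, Finset.mem_powersetCard.mpr ⟨hs.trans (Finset.filter_subset _ _), hs2⟩, ?_⟩
    exact Finset.mem_filter.mpr ⟨ha, fun T hT => (Finset.mem_filter.mp (hs hT)).2⟩
  refine (Finset.card_le_card hsub).trans ?_
  refine (Finset.card_biUnion_le_card_mul _ _ 1 ?_).trans ?_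
  · intro s hs
    obtain ⟨hs1, hs2⟩ := Finset.mem_powersetCard.mp hs
    obtain ⟨T, T', hne, rfl⟩ := Finset.card_eq_two.mp hs2
    rw [Finset.card_le_one]
    intro α hα β hβ
    by_contra hab
    obtain ⟨ha, hα⟩ := Finset.mem_filter.mp hα
    obtain ⟨hb, hβ⟩ := Finset.mem_filter.mp hβ
    obtain ⟨n, hn0, -, -, hn⟩ := meet hA ha hb hab
    have key : ∀ S ∈ ({T, T'} : Finset _), S = A.filter (fun γ => eval n γ = 0) := by
      intro S hS
      obtain ⟨-, v, hv, hSv, -⟩ := Finset.mem_filter.mp (hs1 hS)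
      have h1 := hα S hS
      have h2 := hβ S hS
      rw [hSv] at h1 h2
      obtain ⟨c, rfl⟩ := hn v (Finset.mem_filter.mp h1).2 (Finset.mem_filter.mp h2).2
      have hc : c ≠ 0 := by
        rintro rfl
        exact hv (by simp)
      rw [hSv]
      apply Finset.filter_congr
      intro γ hγ
      rw [eval_smul_hom (hA.1 γ hγ).2]
      simp [hc]
    exact hne ((key T (by simp)).trans (key T' (by simp)).symm)
  · rw [Finset.card_powersetCard, mul_one]
    exact (Nat.choose_le_choose 2 h).trans (by decide)

theorem upper {A : Finset (MvPolynomial (Fin 3) K)} (hA : IsArrangement A) (hAess : IsEssential A)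
    {j : ℕ} {T : Finset (MvPolynomial (Fin 3) K)} (hT : T ∈ mpts A j) :
    ∃ θ : Fin 3 → MvPolynomial (Fin 3) K, θ ≠ 0 ∧
    (∀ i, (θ i).IsHomogeneous (A.card - j)) ∧ applyDer θ (Qpoly A) = 0 := by
  obtain ⟨hTA, p, hp0, hTp, h2, hj⟩ := Finset.mem_filter.mp hT
  rw [Finset.mem_powerset] at hTA
  have hlt : T.card < A.card := by
    apply Finset.card_lt_card
    refine ⟨hTA, fun hle => hp0 (hAess p fun α hα => ?_)⟩
    have := hle hα
    rw [hTp] at this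
    exact (Finset.mem_filter.mp this).2
  let D : MvPolynomial (Fin 3) K → MvPolynomial (Fin 3) K := fun f => ∑ i, C (p i) * pderiv i f
  have hDm : ∀ f g, D (f * g) = D f * g + f * D g := by
    intro f g
    simp only [D, pderiv_mul, Finset.mul_sum, Finset.sum_mul, ← Finset.sum_add_distrib]
    exact Finset.sum_congr rfl fun i _ => by ring
  have hDg : ∀ S ⊆ T, D (∏ α ∈ S, α) = 0 := by
    intro S
    induction S using Finset.induction_on with
    | empty => intro _; simp [D]
    | insert α S hα ih =>
      intro hS
      rw [Finset.prod_insert hα, hDm, ih ((Finset.subset_insert _ _).trans hS)]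
      have hαT : α ∈ T := hS (Finset.mem_insert_self _ _)
      have hpα : eval p α = 0 := by
        rw [hTp] at hαT
        exact (Finset.mem_filter.mp hαT).2
      obtain ⟨a, rfl⟩ := linform (hA.1 α (hTA hαT)).2
      rw [eval_linform] at hpα
      have : D (∑ i, C (a i) * X i) = 0 := by
        simp only [D, pderiv_linform]
        simp only [← C_mul, ← map_sum]
        rw [← C_0, ← hpα]
        congr 1
        exact Finset.sum_congr rfl fun i _ => mul_comm _ _
      rw [this]; simp
  set g := ∏ α ∈ T, α with hg
  set h := ∏ α ∈ A \ T, α with hh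
  have hf : Qpoly A = h * g := by rw [Qpoly, hh, hg, Finset.prod_sdiff hTA]
  have hn : (A \ T).card = A.card - j := by rw [Finset.card_sdiff_of_subset hTA, hj]
  have hhh : h.IsHomogeneous (A.card - j) := by
    have := IsHomogeneous.prod (A \ T) (fun α => α) (fun _ => 1)
      fun α hα => (hA.1 α (Finset.mem_sdiff.mp hα).1).2
    simpa [hn] using this
  have hh0 : h ≠ 0 := Finset.prod_ne_zero_iff.mpr fun α hα => (hA.1 α (Finset.mem_sdiff.mp hα).1).1
  have hDh : (D h).IsHomogeneous (A.card - j - 1) := by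
    apply IsHomogeneous.sum
    intro i _
    have := (isHomogeneous_C (Fin 3) (p i)).mul (hhh.pderiv (i := i))
    simpa using this
  have hfh : (Qpoly A).IsHomogeneous A.card := by
    have := IsHomogeneous.prod A (fun α => α) (fun _ => 1) fun α h => (hA.1 α h).2
    simpa [Qpoly] using this
  have hd0 : (A.card : K) ≠ 0 := by
    have : A.card ≠ 0 := by omega
    exact_mod_cast this
  have hDf : D (Qpoly A) = D h * g := by rw [hf, hDm, hDg T subset_rfl, mul_zero, add_zero]
  refine ⟨fun i => C (A.card : K) * C (p i) * h - D h * X i, ?_, ?_, ?_⟩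
  · intro hz
    have hz' : ∀ i, C (A.card : K) * C (p i) * h = D h * X i := fun i =>
      sub_eq_zero.mp (congrFun hz i)
    obtain ⟨k, hk⟩ := Function.ne_iff.mp hp0
    rw [Pi.zero_apply] at hk
    obtain ⟨l, hl⟩ : ∃ l : Fin 3, l ≠ k := exists_ne k
    have e : (C (p k) * X l - C (p l) * X k) * (C (A.card : K) * h) = 0 := by
      linear_combination X l * hz' k - X k * hz' l
    rcases mul_eq_zero.mp e with e | e
    · have := congrArg (eval (Pi.single l 1)) e
      simp [hl.symm, hk] at this
    · rcases mul_eq_zero.mp e with e | e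
      · exact hd0 (by simpa using e)
      · exact hh0 e
  · intro i
    apply IsHomogeneous.sub
    · have := (isHomogeneous_C (Fin 3) ((A.card : K) * p i)).mul hhh
      simpa only [C_mul, zero_add] using this
    · have := hDh.mul (isHomogeneous_X K i)
      have e : A.card - j - 1 + 1 = A.card - j := by omega
      rwa [e] at this
  · have e1 : applyDer (fun i => C (A.card : K) * C (p i) * h - D h * X i) (Qpoly A) =
        C (A.card : K) * h * D (Qpoly A) - D h * ∑ i, X i * pderiv i (Qpoly A) := by
      simp only [applyDer, D, Finset.mul_sum]
      rw [← Finset.sum_sub_distrib]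
      refine Finset.sum_congr rfl fun i _ => ?_
      ring
    rw [e1, hfh.sum_X_mul_pderiv, hDf, hf, nsmul_eq_mul, map_natCast]
    ring

theorem mdr_eq_s19 {A : Finset (MvPolynomial (Fin 3) K)} {r : ℕ}
    (h1 : ∃ θ : Fin 3 → MvPolynomial (Fin 3) K, θ ≠ 0 ∧
      (∀ i, (θ i).IsHomogeneous r) ∧ applyDer θ (Qpoly A) = 0)
    (h2 : ∀ e < r, ∀ θ : Fin 3 → MvPolynomial (Fin 3) K,
      (∀ i, (θ i).IsHomogeneous e) → applyDer θ (Qpoly A) = 0 → θ = 0) : mdr A = r := by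
  apply le_antisymm
  · exact Nat.sInf_le h1
  · apply le_csInf ⟨r, h1⟩
    rintro e ⟨θ, hθ, hh, h0⟩
    by_contra! hlt
    exact hθ (h2 e hlt θ hh h0)

end Helpers

/-- Let `A` be an essential line arrangement of `d ≥ 2` lines in `P^2`
having only double and triple intersection points (`n_j(A) = 0` for all `j ≥ 4`), with
`n_3 = n_3(A)` triple points. Then:
(1) if `n_3 = 0`, then `r(A) = d − 2`;
(2) if `1 ≤ n_3 ≤ 3`, then `r(A) = d − 3`. -/
theorem mdr_double_triple (A : Finset (MvPolynomial (Fin 3) K))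
    (hA : IsArrangement A) (hAess : IsEssential A) (hd : 2 ≤ A.card)
    (honly : ∀ j, 4 ≤ j → nPoints A j = 0) :
    (nPoints A 3 = 0 → mdr A = A.card - 2) ∧
    (1 ≤ nPoints A 3 → nPoints A 3 ≤ 3 → mdr A = A.card - 3) := by
  have hmult : ∀ j, 4 ≤ j → mpts A j = ∅ := fun j hj => by
    rw [← Finset.card_eq_zero, ← nPoints_eq]
    exact honly j hj
  have h3 : ∀ α, ∀ T ∈ pts A α, T.card ≤ 3 := by
    intro α T hT
    by_contra! hlt
    obtain ⟨h5, h6, h7, v, hv, hTv⟩ := Finset.mem_filter.mp hT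
    have : T ∈ mpts A T.card := Finset.mem_filter.mpr ⟨h5, v, hv, hTv, h7, rfl⟩
    rw [hmult _ hlt] at this
    simp at this
  rw [nPoints_eq]
  constructor
  · intro h0
    have hempty := Finset.card_eq_zero.mp h0
    apply mdr_eq_s19
    · obtain ⟨α, hα, β, hβ, hne⟩ := Finset.one_lt_card.mp hd
      obtain ⟨n, hn0, hnα, hnβ, -⟩ := meet hA hα hβ hne
      have m1 : α ∈ A.filter (fun γ => eval n γ = 0) := Finset.mem_filter.mpr ⟨hα, hnα⟩
      have m2 : β ∈ A.filter (fun γ => eval n γ = 0) := Finset.mem_filter.mpr ⟨hβ, hnβ⟩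
      have hc : 2 ≤ (A.filter (fun γ => eval n γ = 0)).card :=
        Finset.one_lt_card.mpr ⟨α, m1, β, m2, hne⟩
      have hsub := Finset.mem_powerset.mpr (Finset.filter_subset (fun γ => eval n γ = 0) A)
      have hle := h3 α _ (Finset.mem_filter.mpr ⟨hsub, m1, hc, n, hn0, rfl⟩)
      have hm : A.filter (fun γ => eval n γ = 0) ∈
          mpts A (A.filter (fun γ => eval n γ = 0)).card :=
        Finset.mem_filter.mpr ⟨hsub, n, hn0, rfl, hc, rfl⟩
      have hne3 : (A.filter (fun γ => eval n γ = 0)).card ≠ 3 := by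
        intro h
        rw [h, hempty] at hm
        simp at hm
      have h2 : (A.filter (fun γ => eval n γ = 0)).card = 2 := by omega
      rw [h2] at hm
      exact upper hA hAess hm
    · intro e he θ hθ hrel
      apply no_rel hA hθ hrel A subset_rfl (by omega)
      intro α hα
      have := count hA hα (h3 α)
      rw [hempty] at this
      simp only [Finset.filter_empty, Finset.card_empty] at this
      omega
  · intro h1 hle
    apply mdr_eq_s19
    · obtain ⟨T, hT⟩ := Finset.card_pos.mp h1
      exact upper hA hAess hT
    · intro e he θ hθ hrel
      have hb := bad_le hA hle
      have hs := Finset.card_filter_add_card_filter_not (s := A)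
        (fun α => 2 ≤ ((mpts A 3).filter (fun T => α ∈ T)).card)
      apply no_rel hA hθ hrel
        (A.filter fun α => ¬ 2 ≤ ((mpts A 3).filter (fun T => α ∈ T)).card)
        (Finset.filter_subset _ _) (by omega)
      intro α hα
      obtain ⟨ha, hα⟩ := Finset.mem_filter.mp hα
      have := count hA ha (h3 α)
      omega
end
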